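/- arXiv:0807.4181 — 3 statements merged into one kernel-verified Lean document; each statement's English description precedes it below -/
import Mathlib

section
/- For every compact set K ⊆ U × (a,b) there exist N₀ ∈ ℕ and C > 0 such that for every integer N ≥ N₀ one has ĝ₀₀ > 0 on a neighbourhood of K, and at every point of K and for all i ∈ {1, …, n}: |R̂_{i0} + (1/2) ∂_{x^i} R| ≤ C/N. (Proposition 2.2, mixed Ricci components.) -/
/-!
The metric `ĝ` is block diagonal, with spatial block `g / τ` and lapse `φ = ĝ₀₀`, so its Christoffel
symbols are explicit. Using the flow equation,
`Γ̂ʲ_{i0} = Rʲ_i - δʲ_i / (2τ)`, `Γ̂ᵏ_{ij} = Γᵏ_{ij}`, `Γ̂ʲ_{00} = -½ gʲᵏ ∂_k R`,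
`Γ̂⁰_{i0} = ∂_i R / (2τφ)` and `Γ̂⁰_{ij} = -∂_τ(g_{ij}/τ) / (2φ)`.
Substituting in the mixed Ricci component gives

`R̂_{i0} = (∂_j Rʲ_i + Γᵏ_{jk} Rʲ_i - Γᵏ_{ij} Rʲ_k) - ∂_τ Γʲ_{ij} + φ⁻¹ B_i`,

where `B_i` (`errorTerm`) is smooth and does not depend on `N`. The bracket is the divergence of the
Ricci tensor, equal to `½ ∂_i R` by the contracted second Bianchi identity
(`Metric.contracted_bianchi`); and `∂_τ Γʲ_{ij} = ∂_i R` (`Metric.pd_time_trace_gam`), because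
`Γʲ_{ij} = ½ tr (g⁻¹ ∂_i g)`, the expression `∂_τ tr (g⁻¹ ∂_i g)` is symmetric in the two
derivatives, and `tr (g⁻¹ ∂_τ g) = 2R`. Hence `R̂_{i0} + ½ ∂_i R = φ⁻¹ B_i` exactly
(`Flow.hatRic_succ_zero`). On `U × (a,b)` one has `φ ≥ N / (4b³)` for large `N`, since `R` is bounded
and `τ < b`; as `B_i` is bounded on the compact set `K`, the estimate follows.

The second Bianchi identity is proved in matrix form. With `Γ_k = (Γⁱ_{jk})_{ij}` and
`F_{kl} = ∂_k Γ_l - ∂_l Γ_k + [Γ_k, Γ_l]`, it is a formal consequence of `∂_k ∂_l = ∂_l ∂_k` in the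
noncommutative ring of matrices. Metric compatibility `∂_k g⁻¹ = -Γ_k g⁻¹ - g⁻¹ Γ_kᵀ` makes
`F_{kl} g⁻¹` antisymmetric, and the identity for `F_{kl} g⁻¹` is then contracted.
-/

noncomputable section

open scoped BigOperators

namespace CanonicalSoliton

/-- Space-time `ℝⁿ × ℝ`, a point being `(x, τ)`. -/
abbrev E (n : ℕ) := (Fin n → ℝ) × ℝ

variable {n : ℕ}

/-- Spatial partial derivative `∂_{xⁱ}`. -/
def pdx (i : Fin n) (f : E n → ℝ) (p : E n) : ℝ :=
  fderiv ℝ f p (Pi.single i 1, 0)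

/-- Time partial derivative `∂_τ`. -/
def pdt (f : E n → ℝ) (p : E n) : ℝ :=
  fderiv ℝ f p (0, 1)

/-- Coordinate directions on space-time; the index `0` is the time direction `∂/∂τ`,
and the index `i.succ` is the spatial direction `∂/∂xⁱ`. -/
def dir (a : Fin (n + 1)) : E n :=
  Fin.cases ((0 : Fin n → ℝ), (1 : ℝ)) (fun i => (Pi.single i 1, (0 : ℝ))) a

/-- Partial derivative `∂_{x^a}` on space-time, `x⁰ = τ` being time. -/
def pd (a : Fin (n + 1)) (f : E n → ℝ) (p : E n) : ℝ :=
  fderiv ℝ f p (dir a)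

variable (g : E n → Matrix (Fin n) (Fin n) ℝ)

/-- Entries `g^{ij}` of the inverse metric. -/
def ginv (p : E n) : Matrix (Fin n) (Fin n) ℝ := (g p)⁻¹

/-- Christoffel symbols `Γ^i_{jk} = (1/2) g^{il} (∂_{x^j} g_{kl} + ∂_{x^k} g_{jl} − ∂_{x^l} g_{jk})`. -/
def Chr (i j k : Fin n) (p : E n) : ℝ :=
  (1 / 2) * ∑ l, ginv g p i l *
    (pdx j (fun q => g q k l) p + pdx k (fun q => g q j l) p - pdx l (fun q => g q j k) p)

/-- Ricci tensor `R_{jk} = ∂_{x^i} Γ^i_{jk} − ∂_{x^k} Γ^i_{ji} + Γ^i_{jk} Γ^l_{il} − Γ^l_{ji} Γ^i_{lk}`. -/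
def Ric (j k : Fin n) (p : E n) : ℝ :=
  (∑ i, pdx i (Chr g i j k) p) - pdx k (fun q => ∑ i, Chr g i j i q) p
    + (∑ i, ∑ l, Chr g i j k p * Chr g l i l p)
    - ∑ i, ∑ l, Chr g l j i p * Chr g i l k p

/-- Ricci tensor with one index raised: `R^i_j := g^{ik} R_{kj}`. -/
def RicUp (i j : Fin n) (p : E n) : ℝ := ∑ k, ginv g p i k * Ric g k j p

/-- Scalar curvature `R := g^{jk} R_{jk}`. -/
def scal (p : E n) : ℝ := ∑ j, ∑ k, ginv g p j k * Ric g j k p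

/-- `R_τ := ∂_τ R`. -/
def scalτ (p : E n) : ℝ := pdt (scal g) p

/-- Entries of the canonical shrinking-soliton metric `ĝ`:
`ĝ_{ij} = g_{ij}/τ`, `ĝ₀₀ = N/(2τ³) + R/τ − n/(2τ²)`, `ĝ_{0i} = 0`. -/
def hatg (N : ℕ) (a b : Fin (n + 1)) (p : E n) : ℝ :=
  Fin.cases
    (Fin.cases ((N : ℝ) / (2 * p.2 ^ 3) + scal g p / p.2 - (n : ℝ) / (2 * p.2 ^ 2))
      (fun _ => 0) b)
    (fun i => Fin.cases (0 : ℝ) (fun j => g p i j / p.2) b) a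

/-- Entries of the inverse of `ĝ`: `ĝ^{ij} = τ g^{ij}`, `ĝ^{00} = (ĝ₀₀)⁻¹`, `ĝ^{0i} = 0`. -/
def hatginv (N : ℕ) (a b : Fin (n + 1)) (p : E n) : ℝ :=
  Fin.cases
    (Fin.cases (hatg g N 0 0 p)⁻¹ (fun _ => 0) b)
    (fun i => Fin.cases (0 : ℝ) (fun j => p.2 * ginv g p i j) b) a

/-- Christoffel symbols of `ĝ`:
`Γ̂^a_{bc} = (1/2) ĝ^{ad} (∂_{x^b} ĝ_{cd} + ∂_{x^c} ĝ_{bd} − ∂_{x^d} ĝ_{bc})`. -/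
def hatChr (N : ℕ) (a b c : Fin (n + 1)) (p : E n) : ℝ :=
  (1 / 2) * ∑ d, hatginv g N a d p *
    (pd b (hatg g N c d) p + pd c (hatg g N b d) p - pd d (hatg g N b c) p)

/-- Ricci tensor of `ĝ`:
`R̂_{ab} = ∂_{x^c} Γ̂^c_{ab} − ∂_{x^b} Γ̂^c_{ac} + Γ̂^c_{ab} Γ̂^d_{cd} − Γ̂^d_{ac} Γ̂^c_{bd}`. -/
def hatRic (N : ℕ) (a b : Fin (n + 1)) (p : E n) : ℝ :=
  (∑ c, pd c (hatChr g N c a b) p) - pd b (fun q => ∑ c, hatChr g N c a c q) p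
    + (∑ c, ∑ d, hatChr g N c a b p * hatChr g N d c d p)
    - ∑ c, ∑ d, hatChr g N d a c p * hatChr g N c b d p

/-- Hessian with respect to `ĝ`: `∇̂²_{ab} f = ∂_{x^a} ∂_{x^b} f − (∂_{x^c} f) Γ̂^c_{ab}`. -/
def hatHess (N : ℕ) (f : E n → ℝ) (a b : Fin (n + 1)) (p : E n) : ℝ :=
  pd a (fun q => pd b f q) p - ∑ c, pd c f p * hatChr g N c a b p

end CanonicalSoliton

open CanonicalSoliton

namespace CanonicalSoliton

/-! ### Calculus of partial derivatives on an open set -/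

variable {n : ℕ} {Ω : Set (E n)} {p : E n}

/-- `f` is smooth on `Ω`. -/
abbrev Sm (Ω : Set (E n)) (f : E n → ℝ) : Prop := ContDiffOn ℝ (⊤ : ℕ∞) f Ω

theorem Sm.diffAt {f : E n → ℝ} (hΩ : IsOpen Ω) (hp : p ∈ Ω) (hf : Sm Ω f) :
    DifferentiableAt ℝ f p :=
  (hf.contDiffAt (hΩ.mem_nhds hp)).differentiableAt (by simp)

theorem Sm.pd {f : E n → ℝ} (hΩ : IsOpen Ω) (hf : Sm Ω f) (a : Fin (n + 1)) :
    Sm Ω (pd a f) := by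
  have h : ContDiffOn ℝ (⊤ : ℕ∞) (fderiv ℝ f) Ω :=
    hf.fderiv_of_isOpen hΩ (by simp)
  exact h.clm_apply contDiffOn_const

theorem Sm.sum {ι : Type*} {s : Finset ι} {f : ι → E n → ℝ} (hf : ∀ i ∈ s, Sm Ω (f i)) :
    Sm Ω (fun q => ∑ i ∈ s, f i q) := ContDiffOn.sum hf

theorem pd_congr {f g : E n → ℝ} (hΩ : IsOpen Ω) (hp : p ∈ Ω) (a : Fin (n + 1))
    (h : ∀ q ∈ Ω, f q = g q) : pd a f p = pd a g p := by
  have : f =ᶠ[nhds p] g := Filter.eventuallyEq_of_mem (hΩ.mem_nhds hp) h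
  simp only [pd, this.fderiv_eq]

theorem pd_const (a : Fin (n + 1)) (c : ℝ) : pd a (fun _ => c) p = 0 := by
  simp [pd]

theorem pd_add {f g : E n → ℝ} (hΩ : IsOpen Ω) (hp : p ∈ Ω) (hf : Sm Ω f) (hg : Sm Ω g)
    (a : Fin (n + 1)) : pd a (fun q => f q + g q) p = pd a f p + pd a g p := by
  simp only [pd]
  rw [fderiv_fun_add (hf.diffAt hΩ hp) (hg.diffAt hΩ hp)]; simp

theorem pd_neg (f : E n → ℝ) (a : Fin (n + 1)) : pd a (fun q => - f q) p = - pd a f p := by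
  simp only [pd, fderiv_fun_neg]; simp

theorem pd_sub {f g : E n → ℝ} (hΩ : IsOpen Ω) (hp : p ∈ Ω) (hf : Sm Ω f) (hg : Sm Ω g)
    (a : Fin (n + 1)) : pd a (fun q => f q - g q) p = pd a f p - pd a g p := by
  simp only [pd]
  rw [fderiv_fun_sub (hf.diffAt hΩ hp) (hg.diffAt hΩ hp)]; simp

theorem pd_mul {f g : E n → ℝ} (hΩ : IsOpen Ω) (hp : p ∈ Ω) (hf : Sm Ω f) (hg : Sm Ω g)
    (a : Fin (n + 1)) : pd a (fun q => f q * g q) p = pd a f p * g p + f p * pd a g p := by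
  simp only [pd]
  rw [fderiv_fun_mul (hf.diffAt hΩ hp) (hg.diffAt hΩ hp)]; simp; ring

theorem pd_sum {ι : Type*} {s : Finset ι} {f : ι → E n → ℝ} (hΩ : IsOpen Ω) (hp : p ∈ Ω)
    (hf : ∀ i ∈ s, Sm Ω (f i)) (a : Fin (n + 1)) :
    pd a (fun q => ∑ i ∈ s, f i q) p = ∑ i ∈ s, pd a (f i) p := by
  simp only [pd]
  rw [fderiv_fun_sum (fun i hi => (hf i hi).diffAt hΩ hp)]; simp

theorem pd_comm {f : E n → ℝ} (hΩ : IsOpen Ω) (hp : p ∈ Ω) (hf : Sm Ω f)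
    (a b : Fin (n + 1)) : pd a (pd b f) p = pd b (pd a f) p := by
  have h : ContDiffOn ℝ (⊤ : ℕ∞) (fderiv ℝ f) Ω :=
    hf.fderiv_of_isOpen hΩ (by simp)
  have hd : DifferentiableAt ℝ (fderiv ℝ f) p :=
    (h.contDiffAt (hΩ.mem_nhds hp)).differentiableAt (by simp)
  have key : ∀ a b : Fin (n + 1),
      pd a (pd b f) p = fderiv ℝ (fderiv ℝ f) p (dir a) (dir b) := by
    intro a b
    change fderiv ℝ (fun q => fderiv ℝ f q (dir b)) p (dir a) = _
    rw [fderiv_clm_apply hd (differentiableAt_const _)]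
    simp
  have hs : IsSymmSndFDerivAt ℝ f p :=
    (hf.contDiffAt (hΩ.mem_nhds hp)).isSymmSndFDerivAt
      (by
      rw [minSmoothness_of_isRCLikeNormedField]
      exact WithTop.coe_le_coe.2 (le_top : (2 : ℕ∞) ≤ ⊤))
  rw [key, key, hs.eq]

/-! ### Matrix-valued functions -/

/-- The matrix field `M` is smooth on `Ω`, entry by entry. -/
abbrev MSm (Ω : Set (E n)) (M : E n → Matrix (Fin n) (Fin n) ℝ) : Prop :=
  ∀ i j, Sm Ω (fun q => M q i j)

/-- Entrywise partial derivative of a matrix field. -/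
def mpd (a : Fin (n + 1)) (M : E n → Matrix (Fin n) (Fin n) ℝ) (p : E n) :
    Matrix (Fin n) (Fin n) ℝ := Matrix.of fun i j => pd a (fun q => M q i j) p

variable {M N : E n → Matrix (Fin n) (Fin n) ℝ}

theorem MSm.mul (hM : MSm Ω M) (hN : MSm Ω N) : MSm Ω (fun q => M q * N q) := by
  intro i j
  simp only [Matrix.mul_apply]
  exact Sm.sum fun k _ => (hM i k).mul (hN k j)

theorem MSm.add (hM : MSm Ω M) (hN : MSm Ω N) : MSm Ω (fun q => M q + N q) :=
  fun i j => (hM i j).add (hN i j)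

theorem MSm.sub (hM : MSm Ω M) (hN : MSm Ω N) : MSm Ω (fun q => M q - N q) :=
  fun i j => (hM i j).sub (hN i j)

theorem MSm.neg (hM : MSm Ω M) : MSm Ω (fun q => - M q) :=
  fun i j => (hM i j).neg

theorem MSm.transpose (hM : MSm Ω M) : MSm Ω (fun q => (M q).transpose) :=
  fun i j => hM j i

theorem MSm.mpd (hΩ : IsOpen Ω) (hM : MSm Ω M) (a : Fin (n + 1)) : MSm Ω (mpd a M) :=
  fun i j => (hM i j).pd hΩ a

theorem mpd_congr (hΩ : IsOpen Ω) (hp : p ∈ Ω) (a : Fin (n + 1))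
    (h : ∀ q ∈ Ω, M q = N q) : mpd a M p = mpd a N p := by
  ext i j
  exact pd_congr hΩ hp a fun q hq => by rw [h q hq]

theorem mpd_mul (hΩ : IsOpen Ω) (hp : p ∈ Ω) (hM : MSm Ω M) (hN : MSm Ω N)
    (a : Fin (n + 1)) :
    mpd a (fun q => M q * N q) p = mpd a M p * N p + M p * mpd a N p := by
  ext i j
  simp only [mpd, Matrix.of_apply, Matrix.mul_apply, Matrix.add_apply]
  rw [pd_sum hΩ hp (fun k _ => (hM i k).mul (hN k j)), ← Finset.sum_add_distrib]
  exact Finset.sum_congr rfl fun k _ => pd_mul hΩ hp (hM i k) (hN k j) a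

theorem mpd_add (hΩ : IsOpen Ω) (hp : p ∈ Ω) (hM : MSm Ω M) (hN : MSm Ω N)
    (a : Fin (n + 1)) : mpd a (fun q => M q + N q) p = mpd a M p + mpd a N p := by
  ext i j
  exact pd_add hΩ hp (hM i j) (hN i j) a

theorem mpd_sub (hΩ : IsOpen Ω) (hp : p ∈ Ω) (hM : MSm Ω M) (hN : MSm Ω N)
    (a : Fin (n + 1)) : mpd a (fun q => M q - N q) p = mpd a M p - mpd a N p := by
  ext i j
  exact pd_sub hΩ hp (hM i j) (hN i j) a

theorem mpd_neg (a : Fin (n + 1)) : mpd a (fun q => - M q) p = - mpd a M p := by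
  ext i j
  exact pd_neg _ a

theorem mpd_transpose (a : Fin (n + 1)) :
    mpd a (fun q => (M q).transpose) p = (mpd a M p).transpose := rfl

theorem mpd_comm (hΩ : IsOpen Ω) (hp : p ∈ Ω) (hM : MSm Ω M) (a b : Fin (n + 1)) :
    mpd a (mpd b M) p = mpd b (mpd a M) p := by
  ext i j
  exact pd_comm hΩ hp (hM i j) a b

theorem pd_trace (hΩ : IsOpen Ω) (hp : p ∈ Ω) (hM : MSm Ω M) (a : Fin (n + 1)) :
    pd a (fun q => (M q).trace) p = (mpd a M p).trace :=
  pd_sum hΩ hp (fun k _ => hM k k) a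

theorem MSm.det (hM : MSm Ω M) : Sm Ω (fun q => (M q).det) := by
  simp only [Matrix.det_apply']
  exact Sm.sum fun σ _ => contDiffOn_const.mul (contDiffOn_prod fun k _ => hM _ _)

theorem MSm.inv (hM : MSm Ω M) (hdet : ∀ q ∈ Ω, (M q).det ≠ 0) :
    MSm Ω (fun q => (M q)⁻¹) := by
  intro i j
  simp only [Matrix.inv_def, Matrix.smul_apply, smul_eq_mul, Ring.inverse_eq_inv',
    Matrix.adjugate_apply]
  refine (hM.det.inv hdet).mul (MSm.det (M := fun q => (M q).updateRow j (Pi.single i 1)) ?_)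
  intro k l
  by_cases h : k = j
  · subst h; simpa using contDiffOn_const
  · simpa [Matrix.updateRow_ne h] using hM k l

/-! ### Curvature of a family of metrics -/

/-- A smooth field of nondegenerate symmetric matrices on the open set `Ω` of space-time, that is, a
time-dependent family of (pseudo-)Riemannian metrics. -/
structure Metric (Ω : Set (E n)) (g : E n → Matrix (Fin n) (Fin n) ℝ) : Prop where
  isOpen : IsOpen Ω
  smooth : MSm Ω g
  symm : ∀ q ∈ Ω, (g q).transpose = g q
  det : ∀ q ∈ Ω, (g q).det ≠ 0

variable {g : E n → Matrix (Fin n) (Fin n) ℝ}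

/-- The connection matrix `Γ_k`, with entry `Γⁱ_{jk}` in row `i` and column `j`. -/
def Gam (g : E n → Matrix (Fin n) (Fin n) ℝ) (k : Fin n) (p : E n) :
    Matrix (Fin n) (Fin n) ℝ := Matrix.of fun i j => Chr g i j k p

/-- The curvature matrix `F_{kl} = ∂_k Γ_l - ∂_l Γ_k + [Γ_k, Γ_l]`, whose `(i, j)` entry is the
Riemann curvature component `Rⁱ_{jkl}`. -/
def Cur (g : E n → Matrix (Fin n) (Fin n) ℝ) (k l : Fin n) (p : E n) :
    Matrix (Fin n) (Fin n) ℝ :=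
  mpd k.succ (Gam g l) p - mpd l.succ (Gam g k) p + Gam g k p * Gam g l p
    - Gam g l p * Gam g k p

/-- The curvature matrix with both matrix indices raised, `F_{kl} g⁻¹`. -/
def CurUp (g : E n → Matrix (Fin n) (Fin n) ℝ) (k l : Fin n) (p : E n) :
    Matrix (Fin n) (Fin n) ℝ := Cur g k l p * ginv g p

namespace Metric

variable (hg : Metric Ω g)
include hg

theorem mul_ginv (hp : p ∈ Ω) : g p * ginv g p = 1 :=
  Matrix.mul_nonsing_inv _ (isUnit_iff_ne_zero.2 (hg.det p hp))

theorem ginv_mul (hp : p ∈ Ω) : ginv g p * g p = 1 :=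
  Matrix.nonsing_inv_mul _ (isUnit_iff_ne_zero.2 (hg.det p hp))

theorem ginv_symm (hp : p ∈ Ω) : (ginv g p).transpose = ginv g p := by
  rw [ginv, Matrix.transpose_nonsing_inv, hg.symm p hp]

theorem g_symm (hp : p ∈ Ω) (i j : Fin n) : g p i j = g p j i := by
  conv_lhs => rw [← hg.symm p hp]
  rfl

theorem pd_symm (hp : p ∈ Ω) (a : Fin (n + 1)) (i j : Fin n) :
    pd a (fun q => g q i j) p = pd a (fun q => g q j i) p :=
  pd_congr hg.isOpen hp a fun _ hq => hg.g_symm hq i j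

theorem smooth_ginv : MSm Ω (ginv g) := hg.smooth.inv hg.det

theorem smooth_chr (i j k : Fin n) : Sm Ω (Chr g i j k) := by
  unfold Chr
  refine contDiffOn_const.mul (Sm.sum fun l _ => (hg.smooth_ginv i l).mul ?_)
  exact (((hg.smooth k l).pd hg.isOpen j.succ).add ((hg.smooth j l).pd hg.isOpen k.succ)).sub
    ((hg.smooth j k).pd hg.isOpen l.succ)

theorem smooth_gam (k : Fin n) : MSm Ω (Gam g k) := fun i j => hg.smooth_chr i j k

theorem smooth_cur (k l : Fin n) : MSm Ω (Cur g k l) :=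
  ((((hg.smooth_gam l).mpd hg.isOpen k.succ).sub ((hg.smooth_gam k).mpd hg.isOpen l.succ)).add
    ((hg.smooth_gam k).mul (hg.smooth_gam l))).sub ((hg.smooth_gam l).mul (hg.smooth_gam k))

theorem smooth_curUp (k l : Fin n) : MSm Ω (CurUp g k l) :=
  (hg.smooth_cur k l).mul hg.smooth_ginv

theorem chr_symm (hp : p ∈ Ω) (i j k : Fin n) : Chr g i j k p = Chr g i k j p := by
  unfold Chr
  congr 1
  refine Finset.sum_congr rfl fun l _ => ?_
  have := hg.pd_symm hp l.succ j k
  change pdx l (fun q => g q j k) p = pdx l (fun q => g q k j) p at this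
  rw [this]; ring

theorem g_mul_gam (hp : p ∈ Ω) (k i j : Fin n) : (g p * Gam g k p) i j = (1 / 2) *
    (pdx j (fun q => g q k i) p + pdx k (fun q => g q j i) p - pdx i (fun q => g q j k) p) := by
  have h : Gam g k p = (1 / 2 : ℝ) • (ginv g p * Matrix.of fun l j =>
      pdx j (fun q => g q k l) p + pdx k (fun q => g q j l) p - pdx l (fun q => g q j k) p) := by
    ext i j
    simp [Gam, Chr, Matrix.mul_apply]
  rw [h, Matrix.mul_smul, ← mul_assoc, hg.mul_ginv hp, one_mul]
  simp

/-- Metric compatibility of the Levi-Civita connection: `∇g = 0`. -/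
theorem compat (hp : p ∈ Ω) (k : Fin n) :
    mpd k.succ g p = g p * Gam g k p + (Gam g k p).transpose * g p := by
  have h2 : (Gam g k p).transpose * g p = (g p * Gam g k p).transpose := by
    rw [Matrix.transpose_mul, hg.symm p hp]
  ext i j
  rw [h2, Matrix.add_apply, Matrix.transpose_apply, hg.g_mul_gam hp, hg.g_mul_gam hp]
  have e1 := hg.pd_symm hp j.succ k i
  have e2 := hg.pd_symm hp k.succ j i
  have e3 := hg.pd_symm hp i.succ j k
  change pd k.succ (fun q => g q i j) p = (1 / 2) * (pd j.succ _ p + pd k.succ _ p - pd i.succ _ p)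
    + (1 / 2) * (pd i.succ _ p + pd k.succ _ p - pd j.succ _ p)
  rw [e1, e2, e3]; ring

theorem mpd_ginv (hp : p ∈ Ω) (a : Fin (n + 1)) :
    mpd a (ginv g) p = - (ginv g p * mpd a g p * ginv g p) := by
  have h0 : mpd a (fun q => g q * ginv g q) p = 0 := by
    rw [mpd_congr hg.isOpen hp a (N := fun _ => 1) fun q hq => hg.mul_ginv hq]
    ext i j; exact pd_const a _
  rw [mpd_mul hg.isOpen hp hg.smooth hg.smooth_ginv] at h0
  have h1 : ginv g p * (mpd a g p * ginv g p + g p * mpd a (ginv g) p) = 0 := by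
    rw [h0, mul_zero]
  rw [mul_add, ← mul_assoc, ← mul_assoc, hg.ginv_mul hp, one_mul] at h1
  exact eq_neg_of_add_eq_zero_right h1

theorem compat_ginv (hp : p ∈ Ω) (k : Fin n) : mpd k.succ (ginv g) p =
    - (Gam g k p * ginv g p) - ginv g p * (Gam g k p).transpose := by
  rw [hg.mpd_ginv hp, hg.compat hp, mul_add, add_mul, ← mul_assoc, hg.ginv_mul hp, one_mul,
    mul_assoc (ginv g p), mul_assoc _ (g p), hg.mul_ginv hp, mul_one]
  abel

/-- Antisymmetry of the curvature in its first two indices: commuting `∂_k` and `∂_l` on `g⁻¹`,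
by metric compatibility, gives `F_{kl} g⁻¹ + g⁻¹ F_{kl}ᵀ = 0`. -/
theorem curUp_transpose (hp : p ∈ Ω) (k l : Fin n) :
    (CurUp g k l p).transpose = - CurUp g k l p := by
  have hΩ := hg.isOpen
  have key : ∀ k l : Fin n, mpd k.succ (mpd l.succ (ginv g)) p =
      - (mpd k.succ (Gam g l) p * ginv g p)
      + Gam g l p * (Gam g k p * ginv g p + ginv g p * (Gam g k p).transpose)
      + (Gam g k p * ginv g p + ginv g p * (Gam g k p).transpose) * (Gam g l p).transpose
      - ginv g p * (mpd k.succ (Gam g l) p).transpose := by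
    intro k l
    have sG := hg.smooth_ginv
    have sl := hg.smooth_gam l
    rw [mpd_congr hΩ hp k.succ fun q hq => hg.compat_ginv hq l,
      mpd_sub hΩ hp (sl.mul sG).neg (sG.mul sl.transpose), mpd_neg, mpd_mul hΩ hp sl sG,
      mpd_mul hΩ hp sG sl.transpose, mpd_transpose, hg.compat_ginv hp]
    noncomm_ring
  have h := mpd_comm hΩ hp hg.smooth_ginv k.succ l.succ
  rw [key, key, ← sub_eq_zero] at h
  rw [← add_eq_zero_iff_eq_neg, CurUp, Matrix.transpose_mul, hg.ginv_symm hp, Cur]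
  simp only [Matrix.transpose_sub, Matrix.transpose_add, Matrix.transpose_mul]
  rw [← neg_eq_zero, ← h]
  noncomm_ring

omit hg in
theorem cur_swap (k l : Fin n) : Cur g k l p = - Cur g l k p := by
  simp only [Cur]; abel

omit hg in
theorem curUp_swap (k l : Fin n) : CurUp g k l p = - CurUp g l k p := by
  rw [CurUp, cur_swap, neg_mul, CurUp]

theorem mpd_cur (hp : p ∈ Ω) (m k l : Fin n) : mpd m.succ (Cur g k l) p =
    mpd m.succ (mpd k.succ (Gam g l)) p - mpd m.succ (mpd l.succ (Gam g k)) p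
    + (mpd m.succ (Gam g k) p * Gam g l p + Gam g k p * mpd m.succ (Gam g l) p)
    - (mpd m.succ (Gam g l) p * Gam g k p + Gam g l p * mpd m.succ (Gam g k) p) := by
  have hΩ := hg.isOpen
  have sk := hg.smooth_gam k
  have sl := hg.smooth_gam l
  rw [← mpd_mul hΩ hp sk sl, ← mpd_mul hΩ hp sl sk,
    ← mpd_sub hΩ hp (sl.mpd hΩ _) (sk.mpd hΩ _),
    ← mpd_add hΩ hp ((sl.mpd hΩ _).sub (sk.mpd hΩ _)) (sk.mul sl),
    ← mpd_sub hΩ hp (((sl.mpd hΩ _).sub (sk.mpd hΩ _)).add (sk.mul sl)) (sl.mul sk)]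
  rfl

/-- The second Bianchi identity, with the first two indices raised. Since `∇g⁻¹ = 0`, it reduces to
the cyclic sum of `∂_m F_{kl} + [Γ_m, F_{kl}]`, which vanishes formally. -/
theorem bianchi (hp : p ∈ Ω) (m k l : Fin n) :
    (mpd m.succ (CurUp g k l) p + Gam g m p * CurUp g k l p
        + CurUp g k l p * (Gam g m p).transpose)
      + (mpd k.succ (CurUp g l m) p + Gam g k p * CurUp g l m p
        + CurUp g l m p * (Gam g k p).transpose)
      + (mpd l.succ (CurUp g m k) p + Gam g l p * CurUp g m k p
        + CurUp g m k p * (Gam g l p).transpose) = 0 := by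
  have hΩ := hg.isOpen
  have key : ∀ m k l : Fin n, mpd m.succ (CurUp g k l) p + Gam g m p * CurUp g k l p
        + CurUp g k l p * (Gam g m p).transpose =
      (mpd m.succ (Cur g k l) p + Gam g m p * Cur g k l p - Cur g k l p * Gam g m p)
        * ginv g p := by
    intro m k l
    have : mpd m.succ (CurUp g k l) p = _ :=
      mpd_mul hΩ hp (hg.smooth_cur k l) hg.smooth_ginv m.succ
    rw [this, hg.compat_ginv hp, CurUp]
    noncomm_ring
  rw [key, key, key, ← add_mul, ← add_mul]
  convert zero_mul (ginv g p)
  rw [hg.mpd_cur hp, hg.mpd_cur hp, hg.mpd_cur hp,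
    mpd_comm hΩ hp (hg.smooth_gam l) m.succ k.succ,
    mpd_comm hΩ hp (hg.smooth_gam k) m.succ l.succ,
    mpd_comm hΩ hp (hg.smooth_gam m) l.succ k.succ]
  simp only [Cur]
  noncomm_ring

end Metric

/-- The double trace of the second Bianchi identity, as a statement on arrays of reals: `S k l i j`
stands for `(F_{kl} g⁻¹)ⁱʲ`, `dS m k l i j` for its derivative `∂_m`, and `Γ k i j` for `Γⁱ_{jk}`.
The identity is evaluated at `i = k`, `j = l` and summed over `k` and `l`. -/
theorem contract {ι : Type*} [Fintype ι] (dS : ι → ι → ι → ι → ι → ℝ) (S : ι → ι → ι → ι → ℝ)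
    (Γ : ι → ι → ι → ℝ) (m : ι)
    (hd1 : ∀ m k l i j, dS m k l i j = - dS m l k i j)
    (hd2 : ∀ m k l i j, dS m k l i j = - dS m k l j i)
    (hS1 : ∀ k l i j, S k l i j = - S l k i j)
    (hS2 : ∀ k l i j, S k l i j = - S k l j i)
    (hΓ : ∀ k i j, Γ k i j = Γ j i k)
    (hB : ∀ k l i j,
      (dS m k l i j + ∑ p, Γ m i p * S k l p j + ∑ p, S k l i p * Γ m j p)
      + (dS k l m i j + ∑ p, Γ k i p * S l m p j + ∑ p, S l m i p * Γ k j p)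
      + (dS l m k i j + ∑ p, Γ l i p * S m k p j + ∑ p, S m k i p * Γ l j p) = 0) :
    (∑ k, ∑ l, dS k l m l k) + (∑ k, ∑ p, Γ k k p * ∑ i, S i m i p)
      - (∑ k, ∑ p, Γ m k p * ∑ i, S i k i p) = (1 / 2) * ∑ k, ∑ l, dS m k l k l := by
  have h := Finset.sum_eq_zero fun k (_ : k ∈ Finset.univ) =>
    Finset.sum_eq_zero fun l (_ : l ∈ Finset.univ) => hB k l k l
  simp only [Finset.sum_add_distrib] at h
  have t2 : ∑ k, ∑ l, ∑ p, Γ m k p * S k l p l = ∑ k, ∑ p, Γ m k p * ∑ i, S i k i p := by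
    refine Finset.sum_congr rfl fun k _ => ?_
    rw [Finset.sum_comm]
    refine Finset.sum_congr rfl fun q _ => ?_
    rw [Finset.mul_sum]
    refine Finset.sum_congr rfl fun l _ => ?_
    rw [hS1 k l, hS2 l k, neg_neg]
  have t3 : ∑ k, ∑ l, ∑ p, S k l k p * Γ m l p = ∑ k, ∑ p, Γ m k p * ∑ i, S i k i p := by
    rw [Finset.sum_comm]
    refine Finset.sum_congr rfl fun k _ => ?_
    rw [Finset.sum_comm]
    refine Finset.sum_congr rfl fun q _ => ?_
    rw [Finset.mul_sum]
    exact Finset.sum_congr rfl fun l _ => mul_comm _ _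
  have t4 : ∑ k, ∑ l, dS k l m k l = - ∑ k, ∑ l, dS k l m l k := by
    simp only [← Finset.sum_neg_distrib]
    exact Finset.sum_congr rfl fun k _ => Finset.sum_congr rfl fun l _ => hd2 _ _ _ _ _
  have t5 : ∑ k, ∑ l, ∑ p, Γ k k p * S l m p l = - ∑ k, ∑ p, Γ k k p * ∑ i, S i m i p := by
    rw [← Finset.sum_neg_distrib]
    refine Finset.sum_congr rfl fun k _ => ?_
    rw [Finset.sum_comm, ← Finset.sum_neg_distrib]
    refine Finset.sum_congr rfl fun q _ => ?_
    rw [Finset.mul_sum, ← Finset.sum_neg_distrib]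
    refine Finset.sum_congr rfl fun l _ => ?_
    rw [hS2 l m]; ring
  have t6 : ∑ k, ∑ l, ∑ p, S l m k p * Γ k l p = 0 := by
    rw [Finset.sum_comm]
    refine Finset.sum_eq_zero fun l _ => ?_
    have : ∑ k, ∑ p, S l m k p * Γ k l p = - ∑ k, ∑ p, S l m k p * Γ k l p := by
      conv_lhs => rw [Finset.sum_comm]
      simp only [← Finset.sum_neg_distrib]
      refine Finset.sum_congr rfl fun k _ => Finset.sum_congr rfl fun q _ => ?_
      rw [hS2 l m q k, hΓ q l k]; ring
    linarith
  have t7 : ∑ k, ∑ l, dS l m k k l = - ∑ k, ∑ l, dS k l m l k := by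
    rw [Finset.sum_comm]
    simp only [← Finset.sum_neg_distrib]
    exact Finset.sum_congr rfl fun k _ => Finset.sum_congr rfl fun l _ => hd1 _ _ _ _ _
  have t8 : ∑ k, ∑ l, ∑ p, Γ l k p * S m k p l = 0 := by
    refine Finset.sum_eq_zero fun k _ => ?_
    have : ∑ l, ∑ p, Γ l k p * S m k p l = - ∑ l, ∑ p, Γ l k p * S m k p l := by
      conv_lhs => rw [Finset.sum_comm]
      simp only [← Finset.sum_neg_distrib]
      refine Finset.sum_congr rfl fun l _ => Finset.sum_congr rfl fun q _ => ?_
      rw [hS2 m k l q, hΓ q k l]; ring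
    linarith
  have t9 : ∑ k, ∑ l, ∑ p, S m k k p * Γ l l p = - ∑ k, ∑ p, Γ k k p * ∑ i, S i m i p := by
    rw [Finset.sum_comm, ← Finset.sum_neg_distrib]
    refine Finset.sum_congr rfl fun l _ => ?_
    rw [Finset.sum_comm, ← Finset.sum_neg_distrib]
    refine Finset.sum_congr rfl fun q _ => ?_
    rw [Finset.mul_sum, ← Finset.sum_neg_distrib]
    refine Finset.sum_congr rfl fun k _ => ?_
    rw [hS1 m k]; ring
  rw [t2, t3, t4, t5, t6, t7, t8, t9] at h
  linarith

/-! ### Ricci curvature -/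

namespace Metric

variable (hg : Metric Ω g)
include hg

/-- The Ricci tensor is the trace of the curvature: `R_{jk} = Rⁱ_{jik}`. -/
theorem ric_eq (hp : p ∈ Ω) (j k : Fin n) : Ric g j k p = ∑ i, Cur g i k p i j := by
  have h := pd_sum (s := Finset.univ) hg.isOpen hp (fun i _ => hg.smooth_chr i j i) k.succ
  change pdx k (fun q => ∑ i, Chr g i j i q) p = _ at h
  rw [Ric, h]
  simp only [Cur, Matrix.sub_apply, Matrix.add_apply, Finset.sum_add_distrib,
    Finset.sum_sub_distrib, Matrix.mul_apply]
  congr 2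
  · rw [Finset.sum_comm]
    exact Finset.sum_congr rfl fun i _ => Finset.sum_congr rfl fun l _ => mul_comm _ _
  · ext i
    exact Finset.sum_congr rfl fun l _ => mul_comm _ _

theorem smooth_ric (j k : Fin n) : Sm Ω (Ric g j k) :=
  (Sm.sum fun i _ => hg.smooth_cur i k i j).congr fun _ hq => hg.ric_eq hq j k

theorem smooth_scal : Sm Ω (scal g) :=
  Sm.sum fun j _ => Sm.sum fun k _ => (hg.smooth_ginv j k).mul (hg.smooth_ric j k)

theorem smooth_ricUp (j k : Fin n) : Sm Ω (RicUp g j k) :=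
  Sm.sum fun l _ => (hg.smooth_ginv j l).mul (hg.smooth_ric l k)

theorem ginv_apply_symm (hp : p ∈ Ω) (i j : Fin n) : ginv g p i j = ginv g p j i := by
  conv_lhs => rw [← hg.ginv_symm hp]
  rfl

theorem ricUp_eq (hp : p ∈ Ω) (j m : Fin n) : RicUp g j m p = ∑ i, CurUp g i m p i j := by
  simp only [RicUp, hg.ric_eq hp, CurUp, Matrix.mul_apply, Finset.mul_sum]
  rw [Finset.sum_comm]
  refine Finset.sum_congr rfl fun i _ => Finset.sum_congr rfl fun k _ => ?_
  rw [hg.ginv_apply_symm hp j k, mul_comm]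

theorem scal_eq (hp : p ∈ Ω) : scal g p = ∑ m, RicUp g m m p := by
  simp only [scal, RicUp]
  rw [Finset.sum_comm]
  refine Finset.sum_congr rfl fun i _ => Finset.sum_congr rfl fun k _ => ?_
  rw [hg.ginv_apply_symm hp k i]

/-- The contracted second Bianchi identity `∇_k Rᵏ_m = ½ ∂_m R`. -/
theorem contracted_bianchi (hp : p ∈ Ω) (m : Fin n) :
    (∑ k, pd k.succ (RicUp g k m) p) + (∑ k, ∑ l, Chr g k l k p * RicUp g l m p)
      - (∑ k, ∑ l, Chr g k l m p * RicUp g l k p) = (1 / 2) * pd m.succ (scal g) p := by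
  have hΩ := hg.isOpen
  have h := contract (fun m k l i j => mpd m.succ (CurUp g k l) p i j)
    (fun k l i j => CurUp g k l p i j) (fun k i j => Gam g k p i j) m
    (fun m k l i j => by
      rw [mpd_congr hΩ hp m.succ (N := fun q => - CurUp g l k q) fun q _ => curUp_swap k l,
        mpd_neg]; rfl)
    (fun m k l i j => by
      rw [← neg_inj, neg_neg]
      have : (mpd m.succ (fun q => (CurUp g k l q).transpose) p) i j = _ := congrFun (congrFun
        ((mpd_congr hΩ hp m.succ (N := fun q => - CurUp g k l q)
          fun q hq => hg.curUp_transpose hq k l).trans (mpd_neg _)) i) j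
      exact this.symm)
    (fun k l i j => by rw [curUp_swap k l]; rfl)
    (fun k l i j => by
      rw [← neg_inj, neg_neg]
      exact (congrFun (congrFun (hg.curUp_transpose hp k l) i) j).symm)
    (fun k i j => hg.chr_symm hp i j k)
    (fun k l i j => by
      have := congrFun (congrFun (hg.bianchi hp m k l) i) j
      simpa only [Matrix.add_apply, Matrix.mul_apply, Matrix.transpose_apply,
        Matrix.zero_apply] using this)
  have e1 : ∀ k, pd k.succ (RicUp g k m) p = ∑ l, mpd k.succ (CurUp g l m) p l k := by
    intro k
    rw [pd_congr hΩ hp k.succ fun q hq => hg.ricUp_eq hq k m,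
      pd_sum hΩ hp fun l _ => hg.smooth_curUp l m l k]
    rfl
  have e2 : pd m.succ (scal g) p = ∑ k, ∑ l, mpd m.succ (CurUp g k l) p k l := by
    rw [pd_congr hΩ hp m.succ (g := fun q => ∑ l, ∑ k, CurUp g k l q k l) fun q hq => by
        rw [hg.scal_eq hq]; exact Finset.sum_congr rfl fun l _ => hg.ricUp_eq hq l l,
      pd_sum hΩ hp fun l _ => Sm.sum fun k _ => hg.smooth_curUp k l k l, Finset.sum_comm]
    refine Finset.sum_congr rfl fun l _ => ?_
    rw [pd_sum hΩ hp fun k _ => hg.smooth_curUp k l k l]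
    rfl
  simp only [e1, e2, hg.ricUp_eq hp]
  exact h

/-- `Γʲ_{ij} = ½ tr (g⁻¹ ∂_i g)`. -/
theorem trace_gam (hp : p ∈ Ω) (i : Fin n) :
    ∑ j, Chr g j i j p = (1 / 2) * (ginv g p * mpd i.succ g p).trace := by
  have h1 : ∑ j, Chr g j i j p = (Gam g i p).trace :=
    Finset.sum_congr rfl fun j _ => hg.chr_symm hp j i j
  have h2 : (ginv g p * ((Gam g i p).transpose * g p)).trace = (Gam g i p).trace := by
    rw [Matrix.trace_mul_comm, mul_assoc, hg.mul_ginv hp, mul_one, Matrix.trace_transpose]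
  rw [h1, hg.compat hp, mul_add, Matrix.trace_add, h2, ← mul_assoc, hg.ginv_mul hp, one_mul]
  ring

/-- Along the reverse Ricci flow `∂_τ Γʲ_{ij} = ∂_i R`. -/
theorem pd_time_trace_gam
    (hflow : ∀ p ∈ Ω, ∀ j k : Fin n, pdt (fun q => g q j k) p = 2 * Ric g j k p)
    (hp : p ∈ Ω) (i : Fin n) :
    pd 0 (fun q => ∑ j, Chr g j i j q) p = pd i.succ (scal g) p := by
  have hΩ := hg.isOpen
  have sG := hg.smooth_ginv
  have sm : ∀ a : Fin (n + 1), MSm Ω (mpd a g) := fun a => hg.smooth.mpd hΩ a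
  -- apart from the last summand, the right-hand side is symmetric in `a` and `b`
  have key : ∀ a b : Fin (n + 1), pd a (fun q => (1 / 2) * (ginv g q * mpd b g q).trace) p =
      (1 / 2) * (-(ginv g p * mpd a g p * ginv g p * mpd b g p).trace
        + (ginv g p * mpd a (mpd b g) p).trace) := by
    intro a b
    have st : Sm Ω (fun q => (ginv g q * mpd b g q).trace) :=
      Sm.sum fun k _ => (sG.mul (sm b)) k k
    rw [pd_mul hΩ hp contDiffOn_const st, pd_const, pd_trace hΩ hp (sG.mul (sm b)),
      mpd_mul hΩ hp sG (sm b), hg.mpd_ginv hp, Matrix.trace_add, neg_mul, Matrix.trace_neg]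
    ring
  have hs : ∀ q ∈ Ω, scal g q = (1 / 2) * (ginv g q * mpd 0 g q).trace := by
    intro q hq
    simp only [scal, Matrix.trace, Matrix.diag_apply, Matrix.mul_apply, Finset.mul_sum]
    rw [Finset.sum_comm]
    refine Finset.sum_congr rfl fun j _ => Finset.sum_congr rfl fun k _ => ?_
    have : mpd 0 g q k j = 2 * Ric g k j q := hflow q hq k j
    rw [this, hg.ginv_apply_symm hq k j]; ring
  rw [pd_congr hΩ hp 0 fun q hq => hg.trace_gam hq i, pd_congr hΩ hp i.succ hs, key, key,
    mpd_comm hΩ hp hg.smooth 0 i.succ, mul_assoc (ginv g p * _), Matrix.trace_mul_comm,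
    ← mul_assoc]

end Metric

theorem dir_zero_snd : (dir (0 : Fin (n + 1)) : E n).2 = 1 := rfl
theorem dir_succ_snd (i : Fin n) : (dir i.succ : E n).2 = 0 := rfl

theorem pd_time_fun {ψ : ℝ → ℝ} {ψ' : ℝ} (h : HasDerivAt ψ ψ' p.2) (a : Fin (n + 1)) :
    pd a (fun q : E n => ψ q.2) p = (dir a : E n).2 * ψ' := by
  have : HasFDerivAt (fun q : E n => ψ q.2) _ p := h.hasFDerivAt.comp p hasFDerivAt_snd
  rw [pd, this.fderiv]
  simp

/-! ### The soliton metric of a reverse Ricci flow -/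

/-- A family of metrics on `Ω` evolving by the reverse Ricci flow, at positive times. -/
structure Flow (Ω : Set (E n)) (g : E n → Matrix (Fin n) (Fin n) ℝ) : Prop
    extends Metric Ω g where
  time_pos : ∀ q ∈ Ω, 0 < q.2
  flow : ∀ p ∈ Ω, ∀ j k : Fin n, pdt (fun q => g q j k) p = 2 * Ric g j k p

/-- The function `B_i`, independent of `N`, for which `R̂_{i0} + ½ ∂_i R = B_i / ĝ₀₀`. -/
def errorTerm (g : E n → Matrix (Fin n) (Fin n) ℝ) (i : Fin n) (p : E n) : ℝ :=
  pd i.succ (scal g) p / (2 * p.2) * ∑ j, (RicUp g j j p - 1 / (2 * p.2))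
    - ∑ j, (-(1 / 2) * (2 * Ric g i j p / p.2 - g p i j / p.2 ^ 2))
      * (-(1 / 2) * ∑ k, ginv g p j k * pd k.succ (scal g) p)

namespace Flow

variable (hg : Flow Ω g) (N : ℕ)
include hg

theorem smooth_tau_inv : Sm Ω (fun q : E n => (q.2)⁻¹) :=
  contDiffOn_snd.inv fun q hq => (hg.time_pos q hq).ne'

theorem pd_tau_inv (hp : p ∈ Ω) (a : Fin (n + 1)) :
    pd a (fun q : E n => (q.2)⁻¹) p = (dir a : E n).2 * (-(p.2 ^ 2)⁻¹) :=
  pd_time_fun (ψ := fun t => t⁻¹) (hasDerivAt_inv (hg.time_pos p hp).ne') a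

/-- The flow equation transfers the symmetry of `g` to the Ricci tensor. -/
theorem ric_symm (hp : p ∈ Ω) (j k : Fin n) : Ric g j k p = Ric g k j p := by
  have h1 := hg.flow p hp j k
  have h2 := hg.flow p hp k j
  have : pdt (fun q => g q j k) p = pdt (fun q => g q k j) p := hg.pd_symm hp 0 j k
  linarith

theorem smooth_phi : Sm Ω (hatg g N 0 0) := by
  have h1 : ∀ q ∈ Ω, (q : E n).2 ≠ 0 := fun q hq => (hg.time_pos q hq).ne'
  have h : Sm Ω (fun p : E n => (N : ℝ) / (2 * p.2 ^ 3) + scal g p / p.2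
      - (n : ℝ) / (2 * p.2 ^ 2)) := by
    have hs := hg.smooth_scal
    refine ((contDiffOn_const.div (by fun_prop) fun q hq => ?_).add
      (hs.div contDiffOn_snd h1)).sub (contDiffOn_const.div (by fun_prop) fun q hq => ?_)
    · have := h1 q hq; positivity
    · have := h1 q hq; positivity
  exact h

theorem pd_phi (hp : p ∈ Ω) (i : Fin n) :
    pd i.succ (hatg g N 0 0) p = pd i.succ (scal g) p / p.2 := by
  have hΩ := hg.isOpen
  have h1 : p.2 ≠ 0 := (hg.time_pos p hp).ne'
  have sτ := hg.smooth_tau_inv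
  have ss := hg.smooth_scal
  have e : hatg g N 0 0 = fun q => (N : ℝ) / 2 * ((q.2)⁻¹ * ((q.2)⁻¹ * (q.2)⁻¹))
      + scal g q * (q.2)⁻¹ - (n : ℝ) / 2 * ((q.2)⁻¹ * (q.2)⁻¹) := by
    ext q
    change (N : ℝ) / (2 * q.2 ^ 3) + scal g q / q.2 - (n : ℝ) / (2 * q.2 ^ 2) = _
    simp only [div_eq_mul_inv, mul_inv, pow_succ, pow_zero, one_mul]
    ring
  have c : ∀ r : ℝ, Sm Ω (fun _ : E n => r) := fun r => contDiffOn_const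
  rw [e, pd_sub hΩ hp (((c _).mul (sτ.mul (sτ.mul sτ))).add (ss.mul sτ)) ((c _).mul (sτ.mul sτ)),
    pd_add hΩ hp ((c _).mul (sτ.mul (sτ.mul sτ))) (ss.mul sτ),
    pd_mul hΩ hp (c _) (sτ.mul (sτ.mul sτ)), pd_mul hΩ hp ss sτ, pd_mul hΩ hp (c _) (sτ.mul sτ),
    pd_mul hΩ hp sτ (sτ.mul sτ), pd_mul hΩ hp sτ sτ, hg.pd_tau_inv hp, dir_succ_snd, pd_const,
    pd_const]
  ring

theorem pd_hatg_succ (hp : p ∈ Ω) (a : Fin (n + 1)) (i j : Fin n) :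
    pd a (hatg g N i.succ j.succ) p = pd a (fun q => g q i j) p / p.2
      - (dir a : E n).2 * (g p i j / p.2 ^ 2) := by
  have e : hatg g N i.succ j.succ = fun q => g q i j * (q.2)⁻¹ := rfl
  rw [e, pd_mul hg.isOpen hp (hg.smooth i j) hg.smooth_tau_inv, hg.pd_tau_inv hp]
  ring

omit hg in
theorem pd_hatg_zero_succ (a : Fin (n + 1)) (i : Fin n) : pd a (hatg g N 0 i.succ) p = 0 :=
  pd_const a 0
omit hg in
theorem pd_hatg_succ_zero (a : Fin (n + 1)) (i : Fin n) : pd a (hatg g N i.succ 0) p = 0 :=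
  pd_const a 0
omit hg in
theorem hatginv_zero_succ (i : Fin n) : hatginv g N 0 i.succ p = 0 := rfl
omit hg in
theorem hatginv_succ_zero (i : Fin n) : hatginv g N i.succ 0 p = 0 := rfl
omit hg in
theorem hatginv_zero_zero : hatginv g N 0 0 p = (hatg g N 0 0 p)⁻¹ := rfl
omit hg in
theorem hatginv_succ_succ (i j : Fin n) :
    hatginv g N i.succ j.succ p = p.2 * ginv g p i j := rfl

theorem hatChr_zero_succ_zero (hp : p ∈ Ω) (i : Fin n) :
    hatChr g N 0 i.succ 0 p = (hatg g N 0 0 p)⁻¹ * (pd i.succ (scal g) p / (2 * p.2)) := by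
  rw [hatChr, Fin.sum_univ_succ]
  simp only [hatginv_zero_succ, zero_mul, Finset.sum_const_zero, hatginv_zero_zero,
    pd_hatg_succ_zero, hg.pd_phi N hp]
  rw [mul_comm 2, ← div_div]; ring

omit hg in
theorem hatg_symm_zero (i : Fin n) : hatg g N 0 i.succ = hatg g N i.succ 0 := rfl

omit hg in
theorem hatChr_symm_zero (c : Fin (n + 1)) (i : Fin n) :
    hatChr g N c 0 i.succ p = hatChr g N c i.succ 0 p := by
  rw [hatChr, hatChr]
  congr 1
  refine Finset.sum_congr rfl fun d _ => ?_
  rw [hatg_symm_zero]; ring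

theorem hatChr_zero_succ_succ (hp : p ∈ Ω) (i j : Fin n) :
    hatChr g N 0 i.succ j.succ p = (hatg g N 0 0 p)⁻¹ *
      (-(1 / 2) * (2 * Ric g i j p / p.2 - g p i j / p.2 ^ 2)) := by
  have : pd 0 (fun q => g q i j) p = 2 * Ric g i j p := hg.flow p hp i j
  rw [hatChr, Fin.sum_univ_succ]
  simp only [hatginv_zero_succ, zero_mul, Finset.sum_const_zero, hatginv_zero_zero,
    pd_hatg_succ_zero, hg.pd_hatg_succ N hp, dir_zero_snd, this]
  ring

theorem hatChr_succ_zero_zero (hp : p ∈ Ω) (j : Fin n) :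
    hatChr g N j.succ 0 0 p = -(1 / 2) * ∑ k, ginv g p j k * pd k.succ (scal g) p := by
  have h1 : p.2 ≠ 0 := (hg.time_pos p hp).ne'
  rw [hatChr, Fin.sum_univ_succ]
  simp only [hatginv_succ_zero, zero_mul, zero_add, hatginv_succ_succ,
    pd_hatg_zero_succ, hg.pd_phi N hp, Finset.mul_sum]
  refine Finset.sum_congr rfl fun k _ => ?_
  field_simp
  ring

theorem hatChr_succ_succ_zero (hp : p ∈ Ω) (j i : Fin n) :
    hatChr g N j.succ i.succ 0 p = RicUp g j i p - (if j = i then 1 else 0) / (2 * p.2) := by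
  have h1 : p.2 ≠ 0 := (hg.time_pos p hp).ne'
  have h2 : ∑ k, ginv g p j k * g p k i = if j = i then 1 else 0 := by
    rw [← Matrix.mul_apply, hg.ginv_mul hp, Matrix.one_apply]
  rw [← h2, RicUp, Finset.sum_div, ← Finset.sum_sub_distrib, hatChr, Fin.sum_univ_succ]
  simp only [hatginv_succ_zero, zero_mul, zero_add, hatginv_succ_succ,
    pd_hatg_zero_succ, pd_hatg_succ_zero, hg.pd_hatg_succ N hp, dir_zero_snd, Finset.mul_sum]
  refine Finset.sum_congr rfl fun k _ => ?_
  have : pd 0 (fun q => g q i k) p = 2 * Ric g i k p := hg.flow p hp i k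
  rw [this, hg.ric_symm hp i k, hg.g_symm hp i k]
  field_simp
  ring

theorem hatChr_succ_succ_succ (hp : p ∈ Ω) (k i j : Fin n) :
    hatChr g N k.succ i.succ j.succ p = Chr g k i j p := by
  have h1 : p.2 ≠ 0 := (hg.time_pos p hp).ne'
  rw [Chr, hatChr, Fin.sum_univ_succ]
  simp only [hatginv_succ_zero, zero_mul, zero_add, hatginv_succ_succ,
    hg.pd_hatg_succ N hp, dir_succ_snd]
  congr 1
  refine Finset.sum_congr rfl fun k _ => ?_
  simp only [pdx, pd, dir, Fin.cases_succ]
  field_simp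
  ring

theorem smooth_errorTerm (i : Fin n) : Sm Ω (errorTerm g i) := by
  have h1 : ∀ q ∈ Ω, (q : E n).2 ≠ 0 := fun q hq => (hg.time_pos q hq).ne'
  have h2 : ∀ q ∈ Ω, 2 * (q : E n).2 ≠ 0 := fun q hq => mul_ne_zero two_ne_zero (h1 q hq)
  have s1 : Sm Ω (fun q : E n => 2 * q.2) := by unfold Sm; fun_prop
  have c : ∀ r : ℝ, Sm Ω (fun _ : E n => r) := fun r => contDiffOn_const
  have sR := fun k : Fin n => hg.smooth_scal.pd hg.isOpen k.succ
  refine (((sR i).div s1 h2).mul (Sm.sum fun j _ =>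
    (hg.smooth_ricUp j j).sub ((c 1).div s1 h2))).sub (Sm.sum fun j _ => ?_)
  refine ((c _).mul ((((c 2).mul (hg.smooth_ric i j)).div contDiffOn_snd h1).sub
    ((hg.smooth i j).div (contDiffOn_snd.pow 2) fun q hq => pow_ne_zero 2 (h1 q hq)))).mul
    ((c _).mul (Sm.sum fun k _ => (hg.smooth_ginv j k).mul (sR k)))

/-- The exact formula for the mixed Ricci components of `ĝ`. -/
theorem hatRic_succ_zero (hφ : ∀ q ∈ Ω, hatg g N 0 0 q ≠ 0) (hp : p ∈ Ω) (i : Fin n) :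
    hatRic g N i.succ 0 p + (1 / 2) * pdx i (scal g) p
      = (hatg g N 0 0 p)⁻¹ * errorTerm g i p := by
  have hΩ := hg.isOpen
  have h1 : ∀ q ∈ Ω, (q : E n).2 ≠ 0 := fun q hq => (hg.time_pos q hq).ne'
  have sψ : Sm Ω (hatChr g N 0 i.succ 0) := by
    refine ((hg.smooth_phi N).inv hφ |>.mul ((hg.smooth_scal.pd hΩ i.succ).div
      (contDiffOn_const.mul contDiffOn_snd) fun q hq =>
        mul_ne_zero two_ne_zero (h1 q hq))).congr fun q hq => hg.hatChr_zero_succ_zero N hq i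
  have d1 : ∀ j : Fin n, pd j.succ (hatChr g N j.succ i.succ 0) p
      = pd j.succ (RicUp g j i) p := by
    intro j
    have c : Sm Ω (fun _ : E n => (if j = i then 1 else 0 : ℝ) / 2) := contDiffOn_const
    rw [pd_congr hΩ hp j.succ (g := fun q => RicUp g j i q -
        (if j = i then 1 else 0) / 2 * (q.2)⁻¹) fun q hq => by
          rw [hg.hatChr_succ_succ_zero N hq, ← div_div]; rfl,
      pd_sub hΩ hp (hg.smooth_ricUp j i) (c.mul hg.smooth_tau_inv),
      pd_mul hΩ hp c hg.smooth_tau_inv, hg.pd_tau_inv hp, pd_const, dir_succ_snd]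
    ring
  have d2 : pd 0 (fun q => ∑ c, hatChr g N c i.succ c q) p
      = pd 0 (hatChr g N 0 i.succ 0) p + pd i.succ (scal g) p := by
    rw [pd_congr hΩ hp 0 (g := fun q => hatChr g N 0 i.succ 0 q + ∑ j, Chr g j i j q)
        fun q hq => by
          rw [Fin.sum_univ_succ]
          exact congrArg _ (Finset.sum_congr rfl fun j _ => hg.hatChr_succ_succ_succ N hq j i j),
      pd_add hΩ hp sψ (Sm.sum fun j _ => hg.smooth_chr j i j),
      hg.pd_time_trace_gam hg.flow hp i]
  have hb := hg.contracted_bianchi hp i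
  have q1 : ∑ k, ∑ l, Chr g k l k p * RicUp g l i p
      = ∑ j, ∑ k, RicUp g j i p * Chr g k j k p := by
    rw [Finset.sum_comm]
    exact Finset.sum_congr rfl fun _ _ => Finset.sum_congr rfl fun _ _ => mul_comm _ _
  have q2 : ∑ k, ∑ l, Chr g k l i p * RicUp g l k p
      = ∑ j, ∑ k, Chr g k i j p * RicUp g j k p := by
    rw [Finset.sum_comm]
    exact Finset.sum_congr rfl fun l _ => Finset.sum_congr rfl fun k _ => by
      rw [hg.chr_symm hp k l i]
  -- the `δ / (2τ)` parts of `Γ̂ʲ_{i0}` contribute the same trace in the two quadratic terms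
  have q3 : ∑ j, ∑ k, (RicUp g j i p - (if j = i then 1 else 0) / (2 * p.2)) * Chr g k j k p
      = (∑ j, ∑ k, RicUp g j i p * Chr g k j k p) - 1 / (2 * p.2) * ∑ k, Chr g k i k p := by
    simp only [sub_mul, Finset.sum_sub_distrib]
    congr 1
    rw [Finset.sum_eq_single i, Finset.mul_sum]
    · simp
    · intro j _ hj; simp [hj]
    · simp
  have q4 : ∑ j, ∑ k, Chr g k i j p * (RicUp g j k p - (if j = k then 1 else 0) / (2 * p.2))
      = (∑ j, ∑ k, Chr g k i j p * RicUp g j k p) - 1 / (2 * p.2) * ∑ k, Chr g k i k p := by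
    simp only [mul_sub, Finset.sum_sub_distrib]
    congr 1
    rw [Finset.mul_sum]
    refine Finset.sum_congr rfl fun j _ => ?_
    rw [Finset.sum_eq_single j]
    · simp; ring
    · intro k _ hk; simp [hk.symm]
    · simp
  -- block expansion: the products `Γ̂⁰_{i0} Γ̂⁰_{00}` and `Γ̂ʲ_{i0} Γ̂⁰_{j0}` cancel
  have e0 : hatRic g N i.succ 0 p =
      (∑ j : Fin n, pd j.succ (hatChr g N j.succ i.succ 0) p)
      + (pd 0 (hatChr g N 0 i.succ 0) p - pd 0 (fun q => ∑ c, hatChr g N c i.succ c q) p)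
      + (∑ j : Fin n, ∑ k : Fin n, hatChr g N j.succ i.succ 0 p * hatChr g N k.succ j.succ k.succ p)
      - (∑ j : Fin n, ∑ k : Fin n, hatChr g N k.succ i.succ j.succ p
          * hatChr g N j.succ k.succ 0 p)
      + hatChr g N 0 i.succ 0 p * (∑ j : Fin n, hatChr g N j.succ j.succ 0 p)
      - ∑ j : Fin n, hatChr g N 0 i.succ j.succ p * hatChr g N j.succ 0 0 p := by
    simp only [hatRic, Fin.sum_univ_succ, hatChr_symm_zero, Finset.sum_add_distrib,
      Finset.mul_sum]
    ring
  rw [e0, d2]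
  simp only [d1, hg.hatChr_succ_succ_zero N hp, hg.hatChr_succ_succ_succ N hp,
    hg.hatChr_zero_succ_succ N hp, hg.hatChr_succ_zero_zero N hp, hg.hatChr_zero_succ_zero N hp,
    q3, q4, if_true]
  rw [q1, q2] at hb
  have hx : pdx i (scal g) p = pd i.succ (scal g) p := rfl
  rw [hx, errorTerm, mul_sub, Finset.mul_sum (s := Finset.univ) (a := (hatg g N 0 0 p)⁻¹)]
  simp only [mul_assoc] at hb ⊢
  linear_combination hb

end Flow

end CanonicalSoliton

theorem stmt7 (n : ℕ) (U : Set (Fin n → ℝ)) (hU : IsOpen U)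
    (a b : ℝ) (ha : 0 ≤ a) (hab : a < b)
    (g : E n → Matrix (Fin n) (Fin n) ℝ)
    (hsmooth : ∀ i j, ContDiffOn ℝ (⊤ : ℕ∞) (fun p => g p i j) (U ×ˢ Set.Ioo a b))
    (hsymm : ∀ p ∈ U ×ˢ Set.Ioo a b, (g p).IsSymm)
    (hpos : ∀ p ∈ U ×ˢ Set.Ioo a b, (g p).PosDef)
    (hflow : ∀ p ∈ U ×ˢ Set.Ioo a b, ∀ j k : Fin n,
      pdt (fun q => g q j k) p = 2 * Ric g j k p)
    (hRbd : ∃ C : ℝ, ∀ p ∈ U ×ˢ Set.Ioo a b, |scal g p| ≤ C) :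
    ∀ K : Set (E n), K ⊆ U ×ˢ Set.Ioo a b → IsCompact K →
      ∃ N₀ : ℕ, ∃ C : ℝ, 0 < C ∧ ∀ N : ℕ, N₀ ≤ N →
        (∃ V : Set (E n), IsOpen V ∧ K ⊆ V ∧ V ⊆ U ×ˢ Set.Ioo a b ∧
          ∀ p ∈ V, 0 < hatg g N 0 0 p) ∧
        ∀ p ∈ K, ∀ i : Fin n,
          |hatRic g N i.succ 0 p + (1 / 2) * pdx i (scal g) p| ≤ C / (N : ℝ) := by
  intro K hKΩ hK
  obtain ⟨C, hC⟩ := hRbd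
  have hΩ : IsOpen (U ×ˢ Set.Ioo a b) := hU.prod isOpen_Ioo
  have hg : Flow (U ×ˢ Set.Ioo a b) g :=
    { isOpen := hΩ
      smooth := hsmooth
      symm := fun q hq => hsymm q hq
      det := fun q hq => (hpos q hq).det_pos.ne'
      time_pos := fun q hq => ha.trans_lt hq.2.1
      flow := hflow }
  have hb : 0 < b := ha.trans_lt hab
  obtain ⟨M, hM⟩ := hK.exists_bound_of_continuousOn (f := fun q => ∑ i, |errorTerm g i q|)
    (continuousOn_finsetSum _ fun i _ => ((hg.smooth_errorTerm i).continuousOn.mono hKΩ).abs)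
  -- `N ≥ 4|C|b² + 2nb` absorbs `R/τ - n/(2τ²)` into half of the leading term `N/(2τ³)` of `ĝ₀₀`;
  -- the summand `1` makes `N` positive
  obtain ⟨N₀, hN₀⟩ := exists_nat_ge (4 * |C| * b ^ 2 + 2 * n * b + 1)
  have hphi : ∀ N : ℕ, N₀ ≤ N → ∀ q ∈ U ×ˢ Set.Ioo a b,
      (N : ℝ) / (4 * b ^ 3) ≤ hatg g N 0 0 q := by
    intro N hN q hq
    have hN' : 4 * |C| * b ^ 2 + 2 * n * b + 1 ≤ (N : ℝ) := hN₀.trans (by exact_mod_cast hN)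
    have ht : 0 < q.2 := hg.time_pos q hq
    have htb : q.2 < b := hq.2.2
    have hR : -|C| ≤ scal g q :=
      neg_le_of_abs_le ((hC q hq).trans (le_abs_self C))
    have e1 : |C| * q.2 ^ 2 ≤ |C| * b ^ 2 := by gcongr
    have e2 : (n : ℝ) * q.2 ≤ n * b := by gcongr
    have e3 : -|C| * q.2 ^ 2 ≤ scal g q * q.2 ^ 2 := by gcongr
    have key : 0 ≤ (N : ℝ) / 4 + scal g q * q.2 ^ 2 - n * q.2 / 2 := by linarith
    have h1 : (N : ℝ) / (4 * b ^ 3) ≤ N / (4 * q.2 ^ 3) := by gcongr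
    refine h1.trans ?_
    change _ ≤ (N : ℝ) / (2 * q.2 ^ 3) + scal g q / q.2 - (n : ℝ) / (2 * q.2 ^ 2)
    rw [← sub_nonneg]
    have e4 : (N : ℝ) / (2 * q.2 ^ 3) + scal g q / q.2 - (n : ℝ) / (2 * q.2 ^ 2)
        - N / (4 * q.2 ^ 3)
        = ((N : ℝ) / 4 + scal g q * q.2 ^ 2 - n * q.2 / 2) / q.2 ^ 3 := by
      field_simp
      ring
    rw [e4]
    positivity
  have hNpos : ∀ N : ℕ, N₀ ≤ N → (0 : ℝ) < N := by
    intro N hN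
    have hN' : 4 * |C| * b ^ 2 + 2 * n * b + 1 ≤ (N : ℝ) := hN₀.trans (by exact_mod_cast hN)
    have : 0 ≤ 4 * |C| * b ^ 2 + 2 * n * b := by positivity
    linarith
  have hphi0 : ∀ N : ℕ, N₀ ≤ N → ∀ q ∈ U ×ˢ Set.Ioo a b, 0 < hatg g N 0 0 q :=
    fun N hN q hq => lt_of_lt_of_le (by have := hNpos N hN; positivity) (hphi N hN q hq)
  refine ⟨N₀, 4 * b ^ 3 * (|M| + 1), by positivity, fun N hN =>
    ⟨⟨_, hΩ, hKΩ, subset_rfl, hphi0 N hN⟩, fun p hp i => ?_⟩⟩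
  have hpos' := hphi0 N hN p (hKΩ hp)
  have hN0 := hNpos N hN
  rw [hg.hatRic_succ_zero N (fun q hq => (hphi0 N hN q hq).ne') (hKΩ hp) i, abs_mul, abs_inv,
    abs_of_pos hpos']
  have hB : |errorTerm g i p| ≤ |M| + 1 := by
    have h1 : |errorTerm g i p| ≤ ∑ i, |errorTerm g i p| :=
      Finset.single_le_sum (f := fun i => |errorTerm g i p|) (fun _ _ => abs_nonneg _)
        (Finset.mem_univ i)
    have h2 := (le_abs_self _).trans (hM p hp)
    linarith [le_abs_self M]
  have hinv : (hatg g N 0 0 p)⁻¹ ≤ 4 * b ^ 3 / N := by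
    rw [← inv_div]
    exact inv_anti₀ (by positivity) (hphi N hN p (hKΩ hp))
  calc (hatg g N 0 0 p)⁻¹ * |errorTerm g i p| ≤ 4 * b ^ 3 / N * (|M| + 1) := by gcongr
    _ = 4 * b ^ 3 * (|M| + 1) / N := by ring
end
end

section
/- For every compact set K ⊆ U × (a,b) there exist N₀ ∈ ℕ and C > 0 such that for every integer N ≥ N₀ one has ĝ₀₀ > 0 on a neighbourhood of K, and at every point of K and for all i, j ∈ {1, …, n}: |∇̂²_{ij}(N/(2τ)) − ( g_{ij}/(2τ) − R_{ij} )| ≤ C/N, where N/(2τ) denotes the function (x,τ) ↦ N/(2τ) on Û. (Proposition 2.2, spatial Hessian components.) -/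
/-!
The function `f = N/(2τ)` depends on time only and `ĝ` is block diagonal, so the spatial Hessian of
`f` is `-(∂_τ f) Γ̂⁰_{ij} = -(N/(4τ²)) ĝ₀₀⁻¹ ∂_τ(g_{ij}/τ)`. The reverse Ricci flow
turns this into `(N / (2τ³ĝ₀₀)) X_{ij}` with `X_{ij} = g_{ij}/(2τ) - R_{ij}` (`hatHess_eq`).
Now `2τ³ĝ₀₀ = N + e` with `e = 2τ²R - nτ` independent of `N`, hence the Hessian differs from
`X_{ij}` by `-X_{ij} e/(N + e)`. Here `e` is bounded on the whole of `U × (a,b)` because `R` and `τ`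
are, and `X_{ij}` is bounded on `K` because it is continuous: by the flow equation
`R_{ij} = ∂_τ g_{ij}/2`, so no regularity of the Ricci tensor has to be established separately.
-/


noncomputable section

open scoped BigOperators

open CanonicalSoliton

namespace CanonicalSoliton

variable {n : ℕ}

lemma hasFDerivAt_potential (N : ℕ) {p : E n} (hp : p.2 ≠ 0) :
    HasFDerivAt (fun q : E n => (N : ℝ) / (2 * q.2))
      ((-(N : ℝ) / (2 * p.2 ^ 2)) • ContinuousLinearMap.snd ℝ (Fin n → ℝ) ℝ) p := by
  have h1 : HasDerivAt (fun t : ℝ => (N : ℝ) / (2 * t)) (-(N : ℝ) / (2 * p.2 ^ 2)) p.2 := by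
    have h := (hasDerivAt_const p.2 (N : ℝ)).div ((hasDerivAt_id p.2).const_mul 2)
      (mul_ne_zero two_ne_zero hp)
    refine h.congr_deriv ?_
    simp only [id]
    field_simp
    ring
  exact h1.comp_hasFDerivAt p hasFDerivAt_snd

lemma pd_succ_potential (N : ℕ) (j : Fin n) {p : E n} (hp : p.2 ≠ 0) :
    pd j.succ (fun q : E n => (N : ℝ) / (2 * q.2)) p = 0 := by
  simp [pd, (hasFDerivAt_potential N hp).fderiv, dir]

lemma pd_zero_potential (N : ℕ) {p : E n} (hp : p.2 ≠ 0) :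
    pd 0 (fun q : E n => (N : ℝ) / (2 * q.2)) p = -(N : ℝ) / (2 * p.2 ^ 2) := by
  simp [pd, (hasFDerivAt_potential N hp).fderiv, dir]

lemma pd_pd_potential (N : ℕ) (i j : Fin n) {p : E n} (hp : p.2 ≠ 0) :
    pd i.succ (fun q => pd j.succ (fun q : E n => (N : ℝ) / (2 * q.2)) q) p = 0 := by
  have h : (fun q => pd j.succ (fun q : E n => (N : ℝ) / (2 * q.2)) q) =ᶠ[nhds p]
      fun _ => (0 : ℝ) := by
    filter_upwards [continuous_snd.continuousAt.eventually_ne hp] with q hq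
    exact pd_succ_potential N j hq
  rw [pd, h.fderiv_eq]
  simp

variable (g : E n → Matrix (Fin n) (Fin n) ℝ)

lemma pd_zero_hatg_succ (N : ℕ) (i j : Fin n) {p : E n} (hp : p.2 ≠ 0)
    (hg : DifferentiableAt ℝ (fun q => g q i j) p) :
    pd 0 (hatg g N i.succ j.succ) p
      = pdt (fun q => g q i j) p / p.2 - g p i j / p.2 ^ 2 := by
  have hs : HasFDerivAt (fun q : E n => q.2⁻¹)
      ((-(p.2 ^ 2)⁻¹) • ContinuousLinearMap.snd ℝ (Fin n → ℝ) ℝ) p :=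
    (hasDerivAt_inv hp).comp_hasFDerivAt p hasFDerivAt_snd
  have h := hg.hasFDerivAt.mul hs
  have e : hatg g N i.succ j.succ = (fun q => g q i j) * fun q : E n => q.2⁻¹ := by
    funext q
    simp [hatg, div_eq_mul_inv]
  rw [pd, e, h.fderiv]
  simp [dir, pdt]
  ring

/-- The time component of the spatial Christoffel symbols of `ĝ`; only `d = 0` contributes since
`ĝ^{0d} = 0` otherwise, and the mixed components `ĝ_{0i}` vanish identically. -/
lemma hatChr_zero_succ_succ (N : ℕ) (i j : Fin n) (p : E n) :
    hatChr g N 0 i.succ j.succ p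
      = -(1 / 2) * (hatg g N 0 0 p)⁻¹ * pd 0 (hatg g N i.succ j.succ) p := by
  have h0 : ∀ i : Fin n, hatg g N i.succ 0 = fun _ => (0 : ℝ) := fun i => by
    funext q
    simp [hatg]
  have h1 : ∀ (i j : Fin n), pd i.succ (hatg g N j.succ 0) p = 0 := fun i j => by
    rw [pd, h0]
    simp
  have h2 : ∀ d : Fin n, hatginv g N 0 d.succ p = 0 := fun d => by simp [hatginv]
  have h3 : hatginv g N 0 0 p = (hatg g N 0 0 p)⁻¹ := by simp [hatginv]
  rw [hatChr, Fin.sum_univ_succ]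
  simp only [h1, h2, h3, zero_mul, Finset.sum_const_zero]
  ring

/-- Exact formula for the spatial Hessian components under the reverse Ricci flow. -/
lemma hatHess_eq (N : ℕ) (i j : Fin n) {p : E n} (hp : p.2 ≠ 0)
    (hg : DifferentiableAt ℝ (fun q => g q i j) p)
    (hflow : pdt (fun q => g q i j) p = 2 * Ric g i j p) :
    hatHess g N (fun q => (N : ℝ) / (2 * q.2)) i.succ j.succ p
      = N / (2 * p.2 ^ 3) * (hatg g N 0 0 p)⁻¹ * (g p i j / (2 * p.2) - Ric g i j p) := by
  rw [hatHess, pd_pd_potential N i j hp, Fin.sum_univ_succ, pd_zero_potential N hp,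
    hatChr_zero_succ_succ, pd_zero_hatg_succ g N i j hp hg, hflow]
  simp only [pd_succ_potential N _ hp, zero_mul, Finset.sum_const_zero]
  field_simp
  ring

lemma hatg_zero_zero (N : ℕ) {p : E n} (hp : p.2 ≠ 0) :
    hatg g N 0 0 p = (N + (2 * p.2 ^ 2 * scal g p - n * p.2)) / (2 * p.2 ^ 3) := by
  simp only [hatg, Fin.cases_zero]
  field_simp
  ring

end CanonicalSoliton

theorem stmt9 (n : ℕ) (U : Set (Fin n → ℝ)) (hU : IsOpen U)
    (a b : ℝ) (ha : 0 ≤ a) (hab : a < b)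
    (g : E n → Matrix (Fin n) (Fin n) ℝ)
    (hsmooth : ∀ i j, ContDiffOn ℝ (⊤ : ℕ∞) (fun p => g p i j) (U ×ˢ Set.Ioo a b))
    (hsymm : ∀ p ∈ U ×ˢ Set.Ioo a b, (g p).IsSymm)
    (hpos : ∀ p ∈ U ×ˢ Set.Ioo a b, (g p).PosDef)
    (hflow : ∀ p ∈ U ×ˢ Set.Ioo a b, ∀ j k : Fin n,
      pdt (fun q => g q j k) p = 2 * Ric g j k p)
    (hRbd : ∃ C : ℝ, ∀ p ∈ U ×ˢ Set.Ioo a b, |scal g p| ≤ C) :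
    ∀ K : Set (E n), K ⊆ U ×ˢ Set.Ioo a b → IsCompact K →
      ∃ N₀ : ℕ, ∃ C : ℝ, 0 < C ∧ ∀ N : ℕ, N₀ ≤ N →
        (∃ V : Set (E n), IsOpen V ∧ K ⊆ V ∧ V ⊆ U ×ˢ Set.Ioo a b ∧
          ∀ p ∈ V, 0 < hatg g N 0 0 p) ∧
        ∀ p ∈ K, ∀ i j : Fin n,
          |hatHess g N (fun q => (N : ℝ) / (2 * q.2)) i.succ j.succ p
            - (g p i j / (2 * p.2) - Ric g i j p)| ≤ C / (N : ℝ) := by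
  intro K hK hKc
  obtain ⟨C, hC⟩ := hRbd
  have hΩ : IsOpen (U ×ˢ Set.Ioo a b) := hU.prod isOpen_Ioo
  have hτ : ∀ p ∈ U ×ˢ Set.Ioo a b, 0 < p.2 := fun p hp => ha.trans_lt hp.2.1
  have hb : 0 < b := ha.trans_lt hab
  have hX : ∀ i j, ∃ M, ∀ p ∈ K, |g p i j / (2 * p.2) - Ric g i j p| ≤ M := by
    intro i j
    have hd : ContinuousOn (fun p => pdt (fun q => g q i j) p) (U ×ˢ Set.Ioo a b) :=
      ((hsmooth i j).continuousOn_fderiv_of_isOpen hΩ (by simp)).clm_apply continuousOn_const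
    have hc : ContinuousOn (fun p => g p i j / (2 * p.2) - Ric g i j p) K := by
      refine ContinuousOn.sub (((hsmooth i j).continuousOn.mono hK).div (by fun_prop) ?_) ?_
      · intro p hp
        exact mul_ne_zero two_ne_zero (hτ p (hK hp)).ne'
      · refine ((hd.mono hK).div_const 2).congr ?_
        intro p hp
        simp only [hflow p (hK hp) i j]
        ring
    obtain ⟨M, hM⟩ := hKc.exists_bound_of_continuousOn hc
    exact ⟨M, fun p hp => by simpa [Real.norm_eq_abs] using hM p hp⟩
  choose M hM using hX
  set M' : ℝ := ∑ i, ∑ j, |M i j| with hM'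
  have hMle : ∀ i j, M i j ≤ M' := fun i j =>
    (le_abs_self _).trans <|
      (Finset.single_le_sum (f := fun j => |M i j|) (fun _ _ => abs_nonneg _)
        (Finset.mem_univ j)).trans <|
      Finset.single_le_sum (f := fun i => ∑ j, |M i j|)
        (fun _ _ => Finset.sum_nonneg fun _ _ => abs_nonneg _) (Finset.mem_univ i)
  have hM0 : 0 ≤ M' := Finset.sum_nonneg fun _ _ => Finset.sum_nonneg fun _ _ => abs_nonneg _
  -- `B` bounds the part `2τ²R - nτ` of `2τ³ĝ₀₀` that does not depend on `N`.
  set B : ℝ := 2 * b ^ 2 * |C| + n * b with hB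
  have hB0 : 0 ≤ B := by positivity
  have he : ∀ p ∈ U ×ˢ Set.Ioo a b, |2 * p.2 ^ 2 * scal g p - n * p.2| ≤ B := by
    intro p hp
    have hp0 := hτ p hp
    have hpb : p.2 ≤ b := hp.2.2.le
    have hs : |scal g p| ≤ |C| := (hC p hp).trans (le_abs_self C)
    calc |2 * p.2 ^ 2 * scal g p - n * p.2|
        ≤ |2 * p.2 ^ 2 * scal g p| + |n * p.2| := abs_sub _ _
      _ = 2 * p.2 ^ 2 * |scal g p| + n * p.2 := by
        rw [abs_mul, abs_of_nonneg (by positivity : 0 ≤ 2 * p.2 ^ 2),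
          abs_of_nonneg (by positivity : 0 ≤ (n : ℝ) * p.2)]
      _ ≤ B := by rw [hB]; gcongr
  obtain ⟨N₀, hN₀⟩ := exists_nat_ge (2 * B + 1)
  refine ⟨N₀, 2 * M' * B + 1, by positivity, fun N hN => ?_⟩
  have hNB : 2 * B + 1 ≤ (N : ℝ) := hN₀.trans (by exact_mod_cast hN)
  have hNpos : (0 : ℝ) < N := by linarith
  have hden : ∀ p ∈ U ×ˢ Set.Ioo a b,
      (N : ℝ) / 2 ≤ N + (2 * p.2 ^ 2 * scal g p - n * p.2) := fun p hp => by
    have := (abs_le.1 (he p hp)).1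
    linarith
  refine ⟨⟨U ×ˢ Set.Ioo a b, hΩ, hK, subset_rfl, fun p hp => ?_⟩, fun p hpK i j => ?_⟩
  · have hp0 := hτ p hp
    rw [hatg_zero_zero g N hp0.ne']
    have := hden p hp
    exact div_pos (by linarith) (by positivity)
  · have hp := hK hpK
    have hp0 := hτ p hp
    have hdiff : DifferentiableAt ℝ (fun q => g q i j) p :=
      ((hsmooth i j).contDiffAt (hΩ.mem_nhds hp)).differentiableAt (by simp)
    rw [hatHess_eq g N i j hp0.ne' hdiff (hflow p hp i j), hatg_zero_zero g N hp0.ne']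
    have hd := hden p hp
    have hex := he p hp
    have hXb := (hM i j p hpK).trans (hMle i j)
    generalize g p i j / (2 * p.2) - Ric g i j p = X at hXb ⊢
    generalize 2 * p.2 ^ 2 * scal g p - n * p.2 = e at hd hex ⊢
    have hpos' : 0 < (N : ℝ) + e := by linarith
    have heq : (N : ℝ) / (2 * p.2 ^ 3) * ((N + e) / (2 * p.2 ^ 3))⁻¹ * X - X
        = -(X * e / (N + e)) := by
      have := hp0.ne'
      have := hpos'.ne'
      field_simp
      ring
    rw [heq, abs_neg, abs_div, abs_mul, abs_of_pos hpos']
    calc |X| * |e| / (N + e) ≤ M' * B / ((N : ℝ) / 2) := by gcongr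
      _ = 2 * M' * B / N := by field_simp
      _ ≤ (2 * M' * B + 1) / N := by gcongr; linarith
end
end

section
/- For every compact set K ⊆ U × (a,b) there exist N₀ ∈ ℕ and C > 0 such that for every integer N ≥ N₀ one has ĝ₀₀ > 0 on a neighbourhood of K, and at every point of K: |∇̂²_{00}(N/(2τ)) − ( N/(4τ³) + R/τ − n/(4τ²) + R_τ/2 )| ≤ C/N, where N/(2τ) denotes the function (x,τ) ↦ N/(2τ) on Û. (Proposition 2.2, time–time Hessian component.) -/
/-!
Write `h = ĝ₀₀` and `e = 2τ²R − nτ`, so that `h = (N + e) / (2τ³)`. As `ĝ` is block diagonal and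
`f = N / (2τ)` depends on `τ` alone, only `Γ̂⁰₀₀ = ∂_τ h / (2h)` enters the time–time Hessian:
`∇̂²₀₀ f = N/τ³ + (N / (4τ²)) · ∂_τ h / h`. Subtracting the claimed expansion leaves *exactly*
`− e (B + 3e / (4τ³)) / (N + e)` with `B = R_τ/2 − R/(2τ) + n/(2τ²)` (`error_identity`).

The numerator is continuous on `U × (a,b)`, hence bounded on `K`, and `e` is bounded on all of
`U × (a,b)` because `R` and `τ` are. Thus for large `N` one has `N + e ≥ N/2` everywhere, which
gives positivity of `h` (on the neighbourhood `U × (a,b)` of `K`) together with the `O(1/N)` bound.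
The continuity of `R` and `R_τ` follows from the smoothness of `g`, which passes to `g⁻¹`
through the adjugate formula, and from there to `Γ`, `Ric` and `R`.
-/

noncomputable section

open scoped BigOperators

open CanonicalSoliton

open Set Filter Topology

namespace CanonicalSoliton

variable {n : ℕ}

/-! ### Smoothness of the curvature quantities -/

lemma contDiffOn_pdx {s : Set (E n)} (hs : IsOpen s) {f : E n → ℝ}
    (hf : ContDiffOn ℝ (⊤ : ℕ∞) f s) (i : Fin n) : ContDiffOn ℝ (⊤ : ℕ∞) (pdx i f) s :=
  (hf.fderiv_of_isOpen hs (m := (⊤ : ℕ∞)) le_rfl).clm_apply contDiffOn_const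

lemma contDiffOn_pdt {s : Set (E n)} (hs : IsOpen s) {f : E n → ℝ}
    (hf : ContDiffOn ℝ (⊤ : ℕ∞) f s) : ContDiffOn ℝ (⊤ : ℕ∞) (pdt f) s :=
  (hf.fderiv_of_isOpen hs (m := (⊤ : ℕ∞)) le_rfl).clm_apply contDiffOn_const

lemma contDiffOn_det {s : Set (E n)} {A : E n → Matrix (Fin n) (Fin n) ℝ}
    (hA : ∀ i j, ContDiffOn ℝ (⊤ : ℕ∞) (fun p => A p i j) s) :
    ContDiffOn ℝ (⊤ : ℕ∞) (fun p => (A p).det) s := by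
  simp only [Matrix.det_apply']
  exact ContDiffOn.sum fun σ _ => contDiffOn_const.mul (contDiffOn_prod fun i _ => hA _ _)

lemma contDiffOn_ginv {s : Set (E n)} {g : E n → Matrix (Fin n) (Fin n) ℝ}
    (hg : ∀ i j, ContDiffOn ℝ (⊤ : ℕ∞) (fun p => g p i j) s)
    (hdet : ∀ p ∈ s, (g p).det ≠ 0) (i j : Fin n) :
    ContDiffOn ℝ (⊤ : ℕ∞) (fun p => ginv g p i j) s := by
  have hadj : ContDiffOn ℝ (⊤ : ℕ∞) (fun p => (g p).adjugate i j) s := by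
    simp only [Matrix.adjugate_apply]
    refine contDiffOn_det fun k l => ?_
    by_cases hk : k = j
    · subst hk
      simpa [Matrix.updateRow_self] using contDiffOn_const
    · simpa [Matrix.updateRow_ne hk] using hg k l
  simp only [ginv, Matrix.inv_def, Ring.inverse_eq_inv', Matrix.smul_apply, smul_eq_mul]
  exact ((contDiffOn_det hg).inv hdet).mul hadj

lemma contDiffOn_Chr {s : Set (E n)} (hs : IsOpen s) {g : E n → Matrix (Fin n) (Fin n) ℝ}
    (hg : ∀ i j, ContDiffOn ℝ (⊤ : ℕ∞) (fun p => g p i j) s)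
    (hdet : ∀ p ∈ s, (g p).det ≠ 0) (i j k : Fin n) :
    ContDiffOn ℝ (⊤ : ℕ∞) (Chr g i j k) s :=
  contDiffOn_const.mul <| ContDiffOn.sum fun l _ => (contDiffOn_ginv hg hdet i l).mul <|
    ((contDiffOn_pdx hs (hg k l) j).add (contDiffOn_pdx hs (hg j l) k)).sub
      (contDiffOn_pdx hs (hg j k) l)

lemma contDiffOn_Ric {s : Set (E n)} (hs : IsOpen s) {g : E n → Matrix (Fin n) (Fin n) ℝ}
    (hg : ∀ i j, ContDiffOn ℝ (⊤ : ℕ∞) (fun p => g p i j) s)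
    (hdet : ∀ p ∈ s, (g p).det ≠ 0) (j k : Fin n) :
    ContDiffOn ℝ (⊤ : ℕ∞) (Ric g j k) s := by
  have hC := contDiffOn_Chr hs hg hdet
  exact (((ContDiffOn.sum fun i _ => contDiffOn_pdx hs (hC i j k) i).sub
    (contDiffOn_pdx hs (ContDiffOn.sum fun i _ => hC i j i) k)).add
    (ContDiffOn.sum fun i _ => ContDiffOn.sum fun l _ => (hC i j k).mul (hC l i l))).sub
    (ContDiffOn.sum fun i _ => ContDiffOn.sum fun l _ => (hC l j i).mul (hC i l k))

lemma contDiffOn_scal {s : Set (E n)} (hs : IsOpen s) {g : E n → Matrix (Fin n) (Fin n) ℝ}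
    (hg : ∀ i j, ContDiffOn ℝ (⊤ : ℕ∞) (fun p => g p i j) s)
    (hdet : ∀ p ∈ s, (g p).det ≠ 0) : ContDiffOn ℝ (⊤ : ℕ∞) (scal g) s :=
  ContDiffOn.sum fun j _ => ContDiffOn.sum fun k _ =>
    (contDiffOn_ginv hg hdet j k).mul (contDiffOn_Ric hs hg hdet j k)

/-! ### The time–time Hessian component -/

lemma pd_comp_snd {F : ℝ → ℝ} {F' : ℝ} {p : E n} (h : HasDerivAt F F' p.2) (c : Fin (n + 1)) :
    pd c (fun q => F q.2) p = (dir c : E n).2 * F' := by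
  have h2 : HasFDerivAt (fun q : E n => F q.2) _ p := h.hasFDerivAt.comp p hasFDerivAt_snd
  rw [pd, h2.fderiv]
  simp

lemma pd_pot (N : ℕ) {p : E n} (hp : p.2 ≠ 0) (c : Fin (n + 1)) :
    pd c (fun q : E n => (N : ℝ) / (2 * q.2)) p
      = (dir c : E n).2 * (-(N : ℝ) / (2 * p.2 ^ 2)) := by
  refine pd_comp_snd (F := fun t => (N : ℝ) / (2 * t)) ?_ c
  refine HasDerivAt.congr_deriv ((hasDerivAt_const p.2 (N : ℝ)).div ((hasDerivAt_id p.2).const_mul 2)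
    (by simpa using hp)) ?_
  field_simp
  ring

lemma pd_pd_pot (N : ℕ) {p : E n} (hp : p.2 ≠ 0) :
    pd 0 (fun q => pd 0 (fun q : E n => (N : ℝ) / (2 * q.2)) q) p = (N : ℝ) / p.2 ^ 3 := by
  have hev : (fun q => pd 0 (fun q : E n => (N : ℝ) / (2 * q.2)) q)
      =ᶠ[𝓝 p] fun q => -(N : ℝ) / (2 * q.2 ^ 2) := by
    filter_upwards [continuous_snd.continuousAt.eventually_ne hp] with q hq
    simp [pd_pot N hq, dir]
  rw [pd, hev.fderiv_eq, ← pd,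
    pd_comp_snd (F := fun t => -(N : ℝ) / (2 * t ^ 2)) (F' := (N : ℝ) / p.2 ^ 3)]
  · simp [dir]
  · refine HasDerivAt.congr_deriv ((hasDerivAt_const p.2 (-(N : ℝ))).div ((hasDerivAt_pow 2 p.2).const_mul 2)
      (by simpa using hp)) ?_
    field_simp
    ring

lemma pd_hatg00 (g : E n → Matrix (Fin n) (Fin n) ℝ) (N : ℕ) {p : E n} (hp : p.2 ≠ 0)
    (hR : DifferentiableAt ℝ (scal g) p) :
    pd 0 (hatg g N 0 0) p = -3 * (N : ℝ) / (2 * p.2 ^ 4)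
      + (scalτ g p / p.2 - scal g p / p.2 ^ 2) + n / p.2 ^ 3 := by
  -- Restricting to the time line through `p` reduces the claim to one-variable calculus.
  have hline : HasDerivAt (fun t : ℝ => (p.1, t)) ((0 : Fin n → ℝ), (1 : ℝ)) p.2 :=
    (hasDerivAt_const _ _).prodMk (hasDerivAt_id _)
  have hRt : HasDerivAt (fun t => scal g (p.1, t)) (scalτ g p) p.2 :=
    HasFDerivAt.comp_hasDerivAt (f := fun t : ℝ => (p.1, t)) p.2 hR.hasFDerivAt hline
  have h1 : HasDerivAt (fun t : ℝ => (N : ℝ) / (2 * t ^ 3)) (-3 * (N : ℝ) / (2 * p.2 ^ 4)) p.2 := by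
    refine HasDerivAt.congr_deriv ((hasDerivAt_const p.2 (N : ℝ)).div ((hasDerivAt_pow 3 p.2).const_mul 2)
      (by simpa using hp)) ?_
    field_simp
    ring
  have h2 : HasDerivAt (fun t : ℝ => (n : ℝ) / (2 * t ^ 2)) (-(n / p.2 ^ 3)) p.2 := by
    refine HasDerivAt.congr_deriv ((hasDerivAt_const p.2 (n : ℝ)).div ((hasDerivAt_pow 2 p.2).const_mul 2)
      (by simpa using hp)) ?_
    field_simp
    ring
  have h3 : HasDerivAt (fun t : ℝ => scal g (p.1, t) / t)
      (scalτ g p / p.2 - scal g p / p.2 ^ 2) p.2 := by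
    refine HasDerivAt.congr_deriv (hRt.div (hasDerivAt_id p.2) hp) ?_
    field_simp
  have hd : DifferentiableAt ℝ (hatg g N 0 0) p := by
    have e : hatg g N 0 0 = fun q : E n =>
      (N : ℝ) / (2 * q.2 ^ 3) + scal g q / q.2 - (n : ℝ) / (2 * q.2 ^ 2) := rfl
    rw [e]
    have : (2 * p.2 ^ 3) ≠ 0 := by positivity
    have : (2 * p.2 ^ 2) ≠ 0 := by positivity
    fun_prop (disch := assumption)
  have h4 : HasDerivAt (fun t => hatg g N 0 0 (p.1, t)) (pd 0 (hatg g N 0 0) p) p.2 :=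
    HasFDerivAt.comp_hasDerivAt (f := fun t : ℝ => (p.1, t)) p.2 hd.hasFDerivAt hline
  rw [h4.unique ((h1.add h3).sub h2)]
  ring

lemma hatHess00 (g : E n → Matrix (Fin n) (Fin n) ℝ) (N : ℕ) {p : E n} (hp : p.2 ≠ 0) :
    hatHess g N (fun q => (N : ℝ) / (2 * q.2)) 0 0 p = (N : ℝ) / p.2 ^ 3
      + (N : ℝ) / (4 * p.2 ^ 2) * (pd 0 (hatg g N 0 0) p / hatg g N 0 0 p) := by
  have hΓ : hatChr g N 0 0 0 p = (1 / 2) * ((hatg g N 0 0 p)⁻¹ * pd 0 (hatg g N 0 0) p) := by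
    rw [hatChr, Fin.sum_univ_succ]
    simp [hatginv]
  have hdir : ∀ i : Fin n, (dir i.succ : E n).2 = 0 := fun i => rfl
  have hdir0 : (dir 0 : E n).2 = 1 := rfl
  rw [hatHess, pd_pd_pot N hp, Fin.sum_univ_succ]
  simp only [pd_pot N hp, hdir, hdir0, hΓ, zero_mul, Finset.sum_const_zero]
  ring

lemma hatg00_eq (g : E n → Matrix (Fin n) (Fin n) ℝ) (N : ℕ) {p : E n} (hp : p.2 ≠ 0) :
    hatg g N 0 0 p = (N + (2 * p.2 ^ 2 * scal g p - n * p.2)) / (2 * p.2 ^ 3) := by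
  change (N : ℝ) / (2 * p.2 ^ 3) + scal g p / p.2 - (n : ℝ) / (2 * p.2 ^ 2) = _
  field_simp
  ring

/-- The numerator `e (B + 3e / (4τ³))` of the Hessian error, where `e = 2τ²R − nτ` and
`B = R_τ/2 − R/(2τ) + n/(2τ²)`. It does not involve `N`. -/
def errNum (g : E n → Matrix (Fin n) (Fin n) ℝ) (p : E n) : ℝ :=
  (2 * p.2 ^ 2 * scal g p - n * p.2) *
    (scalτ g p / 2 - scal g p / (2 * p.2) + n / (2 * p.2 ^ 2)
      + 3 * (2 * p.2 ^ 2 * scal g p - n * p.2) / (4 * p.2 ^ 3))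

lemma error_identity (g : E n → Matrix (Fin n) (Fin n) ℝ) (N : ℕ) {p : E n} (hp : p.2 ≠ 0)
    (hR : DifferentiableAt ℝ (scal g) p)
    (hN : (N : ℝ) + (2 * p.2 ^ 2 * scal g p - n * p.2) ≠ 0) :
    hatHess g N (fun q => (N : ℝ) / (2 * q.2)) 0 0 p
        - ((N : ℝ) / (4 * p.2 ^ 3) + scal g p / p.2 - (n : ℝ) / (4 * p.2 ^ 2) + scalτ g p / 2)
      = -errNum g p / (N + (2 * p.2 ^ 2 * scal g p - n * p.2)) := by
  rw [hatHess00 g N hp, pd_hatg00 g N hp hR, hatg00_eq g N hp, errNum]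
  generalize hD : (N : ℝ) + (2 * p.2 ^ 2 * scal g p - n * p.2) = D at *
  -- Eliminating `N` in favour of the denominator `D` turns the identity into polynomial algebra.
  have hN' : (N : ℝ) = D - (2 * p.2 ^ 2 * scal g p - n * p.2) := by linarith
  rw [hN']
  field_simp
  ring

end CanonicalSoliton

theorem stmt11 (n : ℕ) (U : Set (Fin n → ℝ)) (hU : IsOpen U)
    (a b : ℝ) (ha : 0 ≤ a) (hab : a < b)
    (g : E n → Matrix (Fin n) (Fin n) ℝ)
    (hsmooth : ∀ i j, ContDiffOn ℝ (⊤ : ℕ∞) (fun p => g p i j) (U ×ˢ Set.Ioo a b))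
    (hsymm : ∀ p ∈ U ×ˢ Set.Ioo a b, (g p).IsSymm)
    (hpos : ∀ p ∈ U ×ˢ Set.Ioo a b, (g p).PosDef)
    (hflow : ∀ p ∈ U ×ˢ Set.Ioo a b, ∀ j k : Fin n,
      pdt (fun q => g q j k) p = 2 * Ric g j k p)
    (hRbd : ∃ C : ℝ, ∀ p ∈ U ×ˢ Set.Ioo a b, |scal g p| ≤ C) :
    ∀ K : Set (E n), K ⊆ U ×ˢ Set.Ioo a b → IsCompact K →
      ∃ N₀ : ℕ, ∃ C : ℝ, 0 < C ∧ ∀ N : ℕ, N₀ ≤ N →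
        (∃ V : Set (E n), IsOpen V ∧ K ⊆ V ∧ V ⊆ U ×ˢ Set.Ioo a b ∧
          ∀ p ∈ V, 0 < hatg g N 0 0 p) ∧
        ∀ p ∈ K, |hatHess g N (fun q => (N : ℝ) / (2 * q.2)) 0 0 p
            - ((N : ℝ) / (4 * p.2 ^ 3) + scal g p / p.2 - (n : ℝ) / (4 * p.2 ^ 2)
                + scalτ g p / 2)| ≤ C / (N : ℝ) := by
  intro K hK hKc
  obtain ⟨C, hC⟩ := hRbd
  have hs : IsOpen (U ×ˢ Ioo a b) := hU.prod isOpen_Ioo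
  have hscal : ContDiffOn ℝ (⊤ : ℕ∞) (scal g) (U ×ˢ Ioo a b) :=
    contDiffOn_scal hs hsmooth fun p hp => (hpos p hp).det_pos.ne'
  have hτ : ∀ p ∈ U ×ˢ Ioo a b, 0 < p.2 := fun p hp => ha.trans_lt hp.2.1
  have hcont : ContinuousOn (errNum g) K := by
    have c1 : ContinuousOn (scal g) K := hscal.continuousOn.mono hK
    have c2 : ContinuousOn (scalτ g) K := (contDiffOn_pdt hs hscal).continuousOn.mono hK
    have n1 : ∀ p ∈ K, 2 * p.2 ≠ 0 := fun p hp => by have := hτ p (hK hp); positivity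
    have n2 : ∀ p ∈ K, 2 * p.2 ^ 2 ≠ 0 := fun p hp => by have := hτ p (hK hp); positivity
    have n3 : ∀ p ∈ K, 4 * p.2 ^ 3 ≠ 0 := fun p hp => by have := hτ p (hK hp); positivity
    unfold errNum
    fun_prop (disch := assumption)
  obtain ⟨M, hM⟩ := hKc.exists_bound_of_continuousOn hcont
  obtain ⟨N₀, hN₀⟩ := exists_nat_gt (2 * (2 * b ^ 2 * |C| + n * b))
  -- For `N ≥ N₀` the term `e = 2τ²R − nτ` is at most `N / 2` in absolute value.
  have hlow : ∀ N : ℕ, N₀ ≤ N → ∀ p ∈ U ×ˢ Ioo a b, 0 < (N : ℝ) ∧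
      (N : ℝ) / 2 ≤ N + (2 * p.2 ^ 2 * scal g p - n * p.2) := by
    intro N hN p hp
    have hN' : (N₀ : ℝ) ≤ N := by exact_mod_cast hN
    have hb : 0 < b := ha.trans_lt hab
    have hpb : p.2 ≤ b := hp.2.2.le
    have h0 := hτ p hp
    have h1 : p.2 ^ 2 * |scal g p| ≤ b ^ 2 * |C| := by
      exact mul_le_mul (by gcongr) ((hC p hp).trans (le_abs_self C)) (abs_nonneg _) (by positivity)
    have h2 : -(p.2 ^ 2 * |scal g p|) ≤ p.2 ^ 2 * scal g p := by
      rw [← mul_neg]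
      gcongr
      exact neg_abs_le _
    have h3 : (n : ℝ) * p.2 ≤ n * b := by gcongr
    have h4 : 0 ≤ b ^ 2 * |C| := by positivity
    have h5 : 0 ≤ (n : ℝ) * b := by positivity
    constructor <;> linarith
  refine ⟨N₀, 2 * (|M| + 1), by positivity, fun N hN => ⟨⟨_, hs, hK, subset_rfl, ?_⟩, ?_⟩⟩
  · intro p hp
    have h0 := hτ p hp
    obtain ⟨h1, h2⟩ := hlow N hN p hp
    rw [hatg00_eq g N h0.ne']
    exact div_pos (by linarith) (by positivity)
  · intro p hp
    have hpS := hK hp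
    obtain ⟨h1, h2⟩ := hlow N hN p hpS
    have hD : 0 < (N : ℝ) + (2 * p.2 ^ 2 * scal g p - n * p.2) := by linarith
    have hdiff : DifferentiableAt ℝ (scal g) p :=
      (hscal.contDiffAt (hs.mem_nhds hpS)).differentiableAt (by simp)
    rw [error_identity g N (hτ p hpS).ne' hdiff hD.ne', abs_div, abs_neg, abs_of_pos hD]
    have hM' : |errNum g p| ≤ |M| + 1 := by
      have := hM p hp
      rw [Real.norm_eq_abs] at this
      linarith [le_abs_self M]
    calc |errNum g p| / (N + (2 * p.2 ^ 2 * scal g p - n * p.2))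
        ≤ (|M| + 1) / (N / 2) := by gcongr
      _ = 2 * (|M| + 1) / N := by field_simp
end
end
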